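/- Let α>0, 0<r<1, β∈ℝ, 1≤p≤∞, and let p' satisfy 1/p+1/p'=1. Define 𝒫_{α,r,n}(t) = Σ_{k=0}^∞ e^{-α(k+n)^r} e^{ikt} and M_n = sup_{t∈ℝ} |𝒫'_{α,r,n}(t)| / |𝒫_{α,r,n}(t)|. Then for all integers n with n ≥ 4π p' M_n if 1≤p'<∞ (and all n≥1 if p'=∞), one has E_n(C^{α,r}_{β,p})_C = ‖𝒫_{α,r,n}‖_{p'} · ( ‖cos t‖_{p'} / (2^{1/p'} π^{1+1/p'}) + δ_n M_n/n ), where |δ_n| < 14. -/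

import Mathlib

open MeasureTheory Real Filter
open scoped ENNReal

/-- The generalized Poisson kernel `P_{α,r,β}(t) = Σ_{k=1}^∞ e^{-α k^r} cos(kt − βπ/2)`. -/
noncomputable def genPoissonKernel (α r β : ℝ) (t : ℝ) : ℝ :=
  ∑' k : ℕ, Real.exp (-α * ((k : ℝ) + 1) ^ r) * Real.cos (((k : ℝ) + 1) * t - β * π / 2)

/-- Fourier cosine coefficient `a_k = (1/π)∫_{-π}^{π} f(t) cos(kt) dt`. -/
noncomputable def fourierCoefA (f : ℝ → ℝ) (k : ℕ) : ℝ :=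
  (1 / π) * ∫ t in (-π)..π, f t * Real.cos (k * t)

/-- Fourier sine coefficient `b_k = (1/π)∫_{-π}^{π} f(t) sin(kt) dt`. -/
noncomputable def fourierCoefB (f : ℝ → ℝ) (k : ℕ) : ℝ :=
  (1 / π) * ∫ t in (-π)..π, f t * Real.sin (k * t)

/-- Partial Fourier sum of order `m` of `f`. -/
noncomputable def fourierSum (m : ℕ) (f : ℝ → ℝ) (x : ℝ) : ℝ :=
  fourierCoefA f 0 / 2 +
    ∑ k ∈ Finset.Icc 1 m, (fourierCoefA f k * Real.cos (k * x) + fourierCoefB f k * Real.sin (k * x))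

/-- The class `C^{α,r}_{β,p}` of generalized Poisson integrals. -/
def poissonClass (α r β : ℝ) (p : ℝ≥0∞) : Set (ℝ → ℝ) :=
  {f | (∀ x, f (x + 2 * π) = f x) ∧ ∃ a₀ : ℝ, ∃ φ : ℝ → ℝ,
    (∀ x, φ (x + 2 * π) = φ x) ∧
    eLpNorm φ p (volume.restrict (Set.Ioc (0 : ℝ) (2 * π))) ≤ 1 ∧
    (∫ t in (0 : ℝ)..(2 * π), φ t) = 0 ∧
    ∀ x, f x = a₀ / 2 + (1 / π) * ∫ t in (-π)..π, genPoissonKernel α r β (x - t) * φ t}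

/-- `E_n(C^{α,r}_{β,p})_C`: uniform deviation of Fourier sums of order `n-1` on the class. -/
noncomputable def EnC (α r β : ℝ) (p : ℝ≥0∞) (n : ℕ) : ℝ :=
  ⨆ f ∈ poissonClass α r β p, ⨆ x : ℝ, |f x - fourierSum (n - 1) f x|

/-- `‖cos‖_{L_s}` over a period. -/
noncomputable def cosNorm (s : ℝ≥0∞) : ℝ :=
  (eLpNorm (fun t : ℝ => Real.cos t) s (volume.restrict (Set.Ioc (0 : ℝ) (2 * π)))).toReal

/-- `𝒫_{α,r,n}(t) = Σ_{k=0}^∞ e^{-α(k+n)^r} e^{ikt}`. -/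
noncomputable def Pn (α r : ℝ) (n : ℕ) (t : ℝ) : ℂ :=
  ∑' k : ℕ, (Real.exp (-α * ((k + n : ℕ) : ℝ) ^ r) : ℂ) *
    Complex.exp (Complex.I * (k : ℂ) * (t : ℂ))

/-- `M_n = sup_{t∈ℝ} |𝒫'_{α,r,n}(t)| / |𝒫_{α,r,n}(t)|`. -/
noncomputable def Mn (α r : ℝ) (n : ℕ) : ℝ :=
  ⨆ t : ℝ, ‖deriv (Pn α r n) t‖ / ‖Pn α r n t‖

/-- finite-order complete monotonicity on the positive half line -/
def CMn : ℕ → (ℝ → ℝ) → Prop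
  | 0, g => ∀ x, 0 < x → 0 ≤ g x
  | (m+1), g => (∀ x, 0 < x → 0 ≤ g x) ∧
      ∃ g' : ℝ → ℝ, (∀ x, 0 < x → HasDerivAt g (-(g' x)) x) ∧ CMn m g'

lemma CMn.nonneg {m : ℕ} {g : ℝ → ℝ} (h : CMn m g) : ∀ x, 0 < x → 0 ≤ g x := by
  cases m with
  | zero => exact h
  | succ m => exact h.1

lemma CMn.pred {m : ℕ} : ∀ {g : ℝ → ℝ}, CMn (m+1) g → CMn m g := by
  induction m with
  | zero => intro g h; exact h.1
  | succ m ih =>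
    intro g h
    obtain ⟨h0, g', h1, h2⟩ := h
    exact ⟨h0, g', h1, ih h2⟩

lemma CMn.add {m : ℕ} : ∀ {f g : ℝ → ℝ}, CMn m f → CMn m g → CMn m (fun x => f x + g x) := by
  induction m with
  | zero => intro f g hf hg x hx; exact add_nonneg (hf x hx) (hg x hx)
  | succ m ih =>
    rintro f g ⟨hf0, f', hf1, hf2⟩ ⟨hg0, g', hg1, hg2⟩
    refine ⟨fun x hx => add_nonneg (hf0 x hx) (hg0 x hx), _, ?_, ih hf2 hg2⟩
    intro x hx
    have := (hf1 x hx).add (hg1 x hx)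
    exact this.congr_deriv (by ring)

lemma CMn.mul {m : ℕ} : ∀ {f g : ℝ → ℝ}, CMn m f → CMn m g → CMn m (fun x => f x * g x) := by
  induction m with
  | zero => intro f g hf hg x hx; exact mul_nonneg (hf x hx) (hg x hx)
  | succ m ih =>
    intro f g hf hg
    have hf' := hf.pred
    have hg' := hg.pred
    obtain ⟨hf0, f', hf1, hf2⟩ := hf
    obtain ⟨hg0, g', hg1, hg2⟩ := hg
    refine ⟨fun x hx => mul_nonneg (hf0 x hx) (hg0 x hx), _, ?_, (ih hf2 hg').add (ih hf' hg2)⟩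
    intro x hx
    have := (hf1 x hx).mul (hg1 x hx)
    exact this.congr_deriv (by ring)

lemma CMn.rpow {m : ℕ} : ∀ {s c : ℝ}, 0 ≤ s → 0 ≤ c → CMn m (fun x => c * x ^ (-s)) := by
  induction m with
  | zero => intro s c hs hc x hx; positivity
  | succ m ih =>
    intro s c hs hc
    refine ⟨fun x hx => by positivity, _, ?_, ih (s := s + 1) (c := c * s) (by positivity) (by positivity)⟩
    intro x hx
    have := (Real.hasDerivAt_rpow_const (x := x) (p := -s) (Or.inl hx.ne')).const_mul c
    exact this.congr_deriv (by rw [show -s - 1 = -(s+1) by ring]; ring)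

lemma CMn.expo {α r : ℝ} (hα : 0 < α) (hr0 : 0 < r) (hr1 : r < 1) (m : ℕ) :
    CMn m (fun x => Real.exp (-α * x ^ r)) := by
  induction m with
  | zero => intro x hx; positivity
  | succ m ih =>
    refine ⟨fun x hx => by positivity, _, ?_,
      (CMn.rpow (m := m) (s := 1 - r) (c := α * r) (by linarith) (by positivity)).mul ih⟩
    intro x hx
    have := ((Real.hasDerivAt_rpow_const (x := x) (p := r) (Or.inl hx.ne')).const_mul (-α)).exp
    exact this.congr_deriv (by rw [show -(1 - r) = r - 1 by ring]; ring)

lemma CMn.shift {m : ℕ} : ∀ {g : ℝ → ℝ}, CMn m g → CMn m (fun x => g (x + 1)) := by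
  induction m with
  | zero => intro g h x hx; exact h _ (by linarith)
  | succ m ih =>
    rintro g ⟨h0, g', h1, h2⟩
    refine ⟨fun x hx => h0 _ (by linarith), _, ?_, ih h2⟩
    intro x hx
    exact (h1 (x + 1) (by linarith)).comp_add_const x 1

lemma CMn.diff {m : ℕ} : ∀ {g : ℝ → ℝ}, CMn (m+1) g → CMn m (fun x => g x - g (x + 1)) := by
  have key : ∀ {m : ℕ} {g : ℝ → ℝ}, CMn (m+1) g → ∀ x, 0 < x → 0 ≤ g x - g (x + 1) := by
    rintro m g ⟨h0, g', h1, h2⟩ x hx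
    have : AntitoneOn g (Set.Ioi 0) := by
      apply antitoneOn_of_deriv_nonpos (convex_Ioi 0)
      · intro y hy; exact (h1 y hy).continuousAt.continuousWithinAt
      · intro y hy
        rw [interior_Ioi] at hy
        exact (h1 y hy).differentiableAt.differentiableWithinAt
      · intro y hy
        rw [interior_Ioi] at hy
        rw [(h1 y hy).deriv]
        have := h2.nonneg y hy
        linarith
    have := this (a := x) (b := x + 1) hx (by simp only [Set.mem_Ioi]; linarith) (by linarith)
    linarith
  induction m with
  | zero => intro g h x hx; exact key h x hx
  | succ m ih =>
    intro g h
    have hk := key h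
    obtain ⟨h0, g', h1, h2⟩ := h
    refine ⟨hk, _, ?_, ih h2⟩
    intro x hx
    have := (h1 x hx).sub ((h1 (x + 1) (by linarith)).comp_add_const x 1)
    exact this.congr_deriv (by ring)

/-- `(E - 1/2)` -/
noncomputable def Bop (g : ℝ → ℝ) : ℝ → ℝ := fun x => g (x + 1) - g x / 2

lemma Bop_iter_sub (j : ℕ) : ∀ (f g : ℝ → ℝ) (x : ℝ),
    (Bop^[j] (fun x => f x / 2 - g x / 2)) x = (Bop^[j] f x) / 2 - (Bop^[j] g x) / 2 := by
  induction j with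
  | zero => intro f g x; rfl
  | succ j ih =>
    intro f g x
    simp only [Function.iterate_succ_apply]
    rw [← ih]
    have : Bop (fun x => f x / 2 - g x / 2) = fun x => Bop f x / 2 - Bop g x / 2 := by
      funext y
      simp only [Bop]; ring
    rw [this]

lemma CMn.bop_bound {j : ℕ} : ∀ {g : ℝ → ℝ}, CMn j g → ∀ x, 0 < x →
    |Bop^[j] g x| ≤ (1/2)^j * g x := by
  induction j with
  | zero => intro g h x hx; simp [abs_of_nonneg (h x hx)]
  | succ j ih =>
    intro g h x hx
    have h1 := ih h.shift.pred x hx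
    have h2 := ih h.diff x hx
    rw [Function.iterate_succ_apply]
    have : Bop g = fun x => (fun x => g (x + 1)) x / 2 - (fun x => g x - g (x + 1)) x / 2 := by
      ext y; simp only [Bop]; ring
    rw [this, Bop_iter_sub]
    rw [abs_le] at h1 h2 ⊢
    rw [pow_succ]
    constructor <;> nlinarith [h1.1, h1.2, h2.1, h2.2]

lemma expo_summable {α r : ℝ} (hα : 0 < α) (hr0 : 0 < r) (b : ℝ) :
    Summable (fun k : ℕ => (k : ℝ) ^ b * Real.exp (-α * (k : ℝ) ^ r)) := by
  have h1 := isLittleO_exp_neg_mul_rpow_atTop hα (-(b + 2) / r)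
  have h2 : Tendsto (fun k : ℕ => (k : ℝ) ^ r) atTop atTop :=
    (tendsto_rpow_atTop hr0).comp tendsto_natCast_atTop_atTop
  have h3 := (h1.comp_tendsto h2).isBigO
  have h4 : (fun k : ℕ => (k : ℝ) ^ b * Real.exp (-α * (k : ℝ) ^ r)) =O[atTop]
      (fun k : ℕ => (k : ℝ) ^ b * (((k : ℝ) ^ r) ^ (-(b+2)/r))) :=
    (Asymptotics.isBigO_refl _ _).mul h3
  refine summable_of_isBigO_nat (g := fun k : ℕ => (k : ℝ) ^ (-2 : ℝ)) ?_ (h4.trans ?_)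
  · exact Real.summable_nat_rpow.2 (by norm_num)
  · apply Asymptotics.IsBigO.of_bound 1
    filter_upwards [eventually_gt_atTop 0] with k hk
    have hk' : (0:ℝ) < k := by exact_mod_cast hk
    rw [← Real.rpow_mul hk'.le, ← Real.rpow_add hk', one_mul]
    apply le_of_eq
    congr 2
    field_simp
    ring

lemma a_summable {α r : ℝ} (hα : 0 < α) (hr0 : 0 < r) (n : ℕ) :
    Summable (fun k : ℕ => Real.exp (-α * ((k + n : ℕ) : ℝ) ^ r)) := by
  have := (summable_nat_add_iff n).2 (expo_summable hα hr0 0)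
  simpa using this

lemma ka_summable {α r : ℝ} (hα : 0 < α) (hr0 : 0 < r) (n : ℕ) :
    Summable (fun k : ℕ => (k : ℝ) * Real.exp (-α * ((k + n : ℕ) : ℝ) ^ r)) := by
  have := (summable_nat_add_iff n).2 (expo_summable hα hr0 1)
  refine Summable.of_nonneg_of_le (fun k => by positivity) (fun k => ?_) this
  simp only [Real.rpow_one]
  gcongr
  simp

noncomputable def Fg (g : ℝ → ℝ) (z : ℂ) : ℂ := ∑' k : ℕ, (g ((k : ℝ) + 1) : ℂ) * z ^ k

lemma Fg_summable {g : ℝ → ℝ} (hg : Summable fun k : ℕ => |g ((k:ℝ)+1)|) {z : ℂ} (hz : ‖z‖ ≤ 1) :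
    Summable (fun k : ℕ => (g ((k : ℝ) + 1) : ℂ) * z ^ k) := by
  refine Summable.of_norm_bounded hg (fun k => ?_)
  rw [norm_mul, norm_pow, Complex.norm_real, Real.norm_eq_abs]
  exact mul_le_of_le_one_right (abs_nonneg _) (pow_le_one₀ (norm_nonneg _) hz)

lemma Fg_step {g : ℝ → ℝ} (hg : Summable fun k : ℕ => |g ((k:ℝ)+1)|) {z : ℂ} (hz : ‖z‖ ≤ 1) :
    (1 - z/2) * Fg g z = g 1 + z * Fg (Bop g) z := by
  have h0 := Fg_summable hg hz
  have h1 := (summable_nat_add_iff 1).2 h0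
  have e1 : Fg g z = g 1 + ∑' k : ℕ, (g (((k+1 : ℕ):ℝ)+1) : ℂ) * z ^ (k+1) := by
    rw [Fg, h0.tsum_eq_zero_add]; simp
  have e2 : z * Fg (Bop g) z = (∑' k : ℕ, (g (((k+1 : ℕ):ℝ)+1) : ℂ) * z ^ (k+1)) - z/2 * Fg g z := by
    rw [Fg, Fg, ← tsum_mul_left, ← tsum_mul_left, ← h1.tsum_sub (h0.mul_left (z/2))]
    congr 1; ext k
    simp only [Bop]; push_cast; ring
  rw [e2]
  linear_combination e1

lemma Bop_summable {g : ℝ → ℝ} (hg : Summable fun k : ℕ => |g ((k:ℝ)+1)|) :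
    Summable fun k : ℕ => |Bop g ((k:ℝ)+1)| := by
  have h1 := (summable_nat_add_iff 1).2 hg
  refine Summable.of_nonneg_of_le (fun _ => abs_nonneg _) (fun k => ?_) (h1.add hg)
  simp only [Bop]; push_cast
  have h2 := abs_sub (g ((k:ℝ)+1+1)) (g ((k:ℝ)+1)/2)
  have h3 : |g ((k:ℝ)+1)/2| = |g ((k:ℝ)+1)|/2 := by rw [abs_div]; norm_num
  have := abs_nonneg (g ((k:ℝ)+1))
  linarith

lemma Bop_iter_summable {g : ℝ → ℝ} (hg : Summable fun k : ℕ => |g ((k:ℝ)+1)|) (N : ℕ) :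
    Summable fun k : ℕ => |Bop^[N] g ((k:ℝ)+1)| := by
  induction N with
  | zero => exact hg
  | succ N ih => rw [Function.iterate_succ_apply']; exact Bop_summable ih

lemma Fg_partial {g : ℝ → ℝ} (hg : Summable fun k : ℕ => |g ((k:ℝ)+1)|) {z : ℂ} (hz : ‖z‖ ≤ 1)
    (N : ℕ) : Fg g z = (1 - z/2)⁻¹ * ∑ j ∈ Finset.range N, (Bop^[j] g 1 : ℂ) * (z / (1-z/2))^j
      + (z / (1-z/2))^N * Fg (Bop^[N] g) z := by
  have hne : (1 - z/2) ≠ 0 := by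
    intro h
    have : z = 2 := by linear_combination -2 * h
    rw [this] at hz; norm_num at hz
  induction N with
  | zero => simp
  | succ N ih =>
    have hs := Fg_step (Bop_iter_summable hg N) hz
    rw [ih, Finset.sum_range_succ]
    simp only [Function.iterate_succ_apply']
    have : Fg (Bop^[N] g) z = (1 - z/2)⁻¹ * (Bop^[N] g 1 + z * Fg (Bop (Bop^[N] g)) z) := by
      rw [← hs, inv_mul_cancel_left₀ hne]
    rw [this, pow_succ]
    field_simp
    ring

lemma Fg_eq {g : ℝ → ℝ} (hg : Summable fun k : ℕ => |g ((k:ℝ)+1)|)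
    (hb : ∀ j x, 0 < x → |Bop^[j] g x| ≤ (1/2)^j * g x) {z : ℂ} (hz : ‖z‖ ≤ 1)
    (hw : ‖z / (1-z/2)‖ < 2) :
    Fg g z = (1 - z/2)⁻¹ * ∑' j, (Bop^[j] g 1 : ℂ) * (z / (1-z/2))^j := by
  set w := z / (1-z/2) with hwd
  have hq : ‖w‖/2 < 1 := by linarith
  have hq0 : 0 ≤ ‖w‖/2 := by positivity
  have hsum : Summable (fun j => (Bop^[j] g 1 : ℂ) * w^j) := by
    refine Summable.of_norm_bounded ((summable_geometric_of_lt_one hq0 hq).mul_left (g 1)) (fun j => ?_)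
    rw [norm_mul, norm_pow, Complex.norm_real, Real.norm_eq_abs]
    calc _ ≤ ((1/2)^j * g 1) * ‖w‖^j := by gcongr; exact hb j 1 one_pos
      _ = _ := by rw [div_pow, div_pow]; ring
  have h1 : Tendsto (fun N => (1 - z/2)⁻¹ * ∑ j ∈ Finset.range N, (Bop^[j] g 1 : ℂ) * w^j) atTop
      (nhds ((1 - z/2)⁻¹ * ∑' j, (Bop^[j] g 1 : ℂ) * w^j)) :=
    hsum.hasSum.tendsto_sum_nat.const_mul _
  have h2 : Tendsto (fun N => w^N * Fg (Bop^[N] g) z) atTop (nhds 0) := by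
    have h3 : Tendsto (fun N => (‖w‖/2)^N * ∑' k : ℕ, |g ((k:ℝ)+1)|) atTop (nhds 0) := by
      simpa using (tendsto_pow_atTop_nhds_zero_of_lt_one hq0 hq).mul_const (∑' k : ℕ, |g ((k:ℝ)+1)|)
    refine squeeze_zero_norm (fun N => ?_) h3
    rw [norm_mul, norm_pow, div_pow, div_mul_eq_mul_div, mul_div_assoc]
    gcongr
    rw [div_eq_inv_mul, ← tsum_mul_left]
    refine tsum_of_norm_bounded (hg.mul_left _).hasSum (fun k => ?_)
    rw [norm_mul, norm_pow, Complex.norm_real, Real.norm_eq_abs]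
    calc |Bop^[N] g ((k:ℝ)+1)| * ‖z‖^k ≤ |Bop^[N] g ((k:ℝ)+1)| :=
          mul_le_of_le_one_right (abs_nonneg _) (pow_le_one₀ (norm_nonneg _) hz)
      _ ≤ (1/2)^N * g ((k:ℝ)+1) := hb N _ (by positivity)
      _ ≤ _ := by rw [one_div, inv_pow]; gcongr; exact le_abs_self _
  have h4 := h1.add h2
  rw [add_zero] at h4
  refine tendsto_nhds_unique (tendsto_const_nhds.congr (fun N => ?_)) h4
  exact Fg_partial hg hz N

lemma norm_w_lt {t : ℝ} (ht : t ∈ Set.Ioo 0 (2*π)) :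
    ‖Complex.exp (Complex.I * t) / (1 - Complex.exp (Complex.I * t)/2)‖ < 2 := by
  have hn : ‖Complex.exp (Complex.I * t)‖ = 1 := by
    rw [mul_comm]; exact Complex.norm_exp_ofReal_mul_I t
  rw [norm_div, hn]
  have hc : Real.cos t < 1 := by
    refine lt_of_le_of_ne (Real.cos_le_one t) (fun h => ?_)
    have := (Real.cos_eq_one_iff_of_lt_of_lt (by linarith [ht.1, Real.pi_pos]) ht.2).1 h
    linarith [ht.1]
  have hsq := Real.sin_sq_add_cos_sq t
  have h2 : (1/2)^2 < ‖1 - Complex.exp (Complex.I * t)/2‖^2 := by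
    rw [← Complex.normSq_eq_norm_sq, mul_comm, Complex.exp_mul_I, ← Complex.ofReal_cos,
      ← Complex.ofReal_sin, Complex.normSq_apply]
    generalize Real.cos t = c at *
    generalize Real.sin t = s at *
    simp
    nlinarith
  have h3 : 1/2 < ‖1 - Complex.exp (Complex.I * t)/2‖ := lt_of_pow_lt_pow_left₀ 2 (norm_nonneg _) h2
  rw [div_lt_iff₀ (by linarith)]
  linarith

lemma H_analytic {b : ℕ → ℂ} {C : ℝ} (hb : ∀ j, ‖b j‖ ≤ C * (1/2)^j) {w : ℂ} (hw : ‖w‖ < 2) :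
    AnalyticAt ℂ (fun w => ∑' j, b j * w^j) w := by
  obtain ⟨ρ, h1, h2⟩ := exists_between hw
  have h0 : 0 ≤ ρ := (norm_nonneg _).trans h1.le
  have hd : DifferentiableOn ℂ (fun w => ∑' j, b j * w^j) (Metric.ball 0 ρ) := by
    refine Complex.differentiableOn_tsum_of_summable_norm (u := fun j => C * (ρ/2)^j) ?_ ?_ Metric.isOpen_ball ?_
    · exact (summable_geometric_of_lt_one (by positivity) (by linarith)).mul_left _
    · intro j; fun_prop
    · intro j w hw
      rw [norm_mul, norm_pow]
      have : ‖w‖ ≤ ρ := by simpa using (Metric.mem_ball.1 hw).le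
      calc _ ≤ (C * (1/2)^j) * ρ^j := by
            gcongr
            · exact (norm_nonneg _).trans (hb j)
            · exact hb j
        _ = _ := by rw [div_pow, div_pow]; ring
  exact hd.analyticAt (Metric.isOpen_ball.mem_nhds (by simpa using h1))

noncomputable def Fn (α r : ℝ) (n : ℕ) (θ : ℝ) (t : ℝ) : ℝ :=
  (Complex.exp (Complex.I * ((n * t - θ : ℝ) : ℂ)) * Pn α r n t).re

lemma Pn_hasSum {α r : ℝ} (hα : 0 < α) (hr0 : 0 < r) (n : ℕ) (t : ℝ) :
    HasSum (fun k : ℕ => (Real.exp (-α * ((k + n : ℕ) : ℝ) ^ r) : ℂ) *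
    Complex.exp (Complex.I * (k : ℂ) * (t : ℂ))) (Pn α r n t) := by
  apply Summable.hasSum
  refine Summable.of_norm_bounded (a_summable hα hr0 n) (fun k => ?_)
  rw [norm_mul, Complex.norm_real, show Complex.I * (k:ℂ) * (t:ℂ) = ((k * t : ℝ) : ℂ) * Complex.I by push_cast; ring,
    Complex.norm_exp_ofReal_mul_I]
  simp

lemma Fn_hasSum {α r : ℝ} (hα : 0 < α) (hr0 : 0 < r) (n : ℕ) (θ t : ℝ) :
    HasSum (fun k : ℕ => Real.exp (-α * ((k + n : ℕ) : ℝ) ^ r) *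
      Real.cos (((k + n : ℕ) : ℝ) * t - θ)) (Fn α r n θ t) := by
  rw [Fn]
  have h := (Pn_hasSum hα hr0 n t).mul_left (Complex.exp (Complex.I * ((n * t - θ : ℝ) : ℂ)))
  have h2 := Complex.reCLM.hasSum h
  simp only [Complex.reCLM_apply] at h2
  convert h2 using 1
  funext k
  rw [mul_left_comm, ← Complex.exp_add, Complex.re_ofReal_mul,
    show Complex.I * ((n * t - θ : ℝ) : ℂ) + Complex.I * (k:ℂ) * (t:ℂ) =
      ((((k + n : ℕ) : ℝ) * t - θ : ℝ) : ℂ) * Complex.I by push_cast; ring,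
    Complex.exp_ofReal_mul_I_re]

lemma gen_eq {α r : ℝ} (hα : 0 < α) (hr0 : 0 < r) (β t : ℝ) :
    genPoissonKernel α r β t = Fn α r 1 (β * π / 2) t := by
  rw [← (Fn_hasSum hα hr0 1 (β * π / 2) t).tsum_eq, genPoissonKernel]
  congr 1; ext k; push_cast; rfl

lemma Pn_one_eq (α r t : ℝ) :
    Pn α r 1 t = Fg (fun x => Real.exp (-α * x ^ r)) (Complex.exp (Complex.I * t)) := by
  rw [Pn, Fg]
  congr 1; ext k
  rw [← Complex.exp_nat_mul]
  push_cast
  congr 2; ring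

lemma gen_analytic {α r : ℝ} (hα : 0 < α) (hr0 : 0 < r) (hr1 : r < 1) (β : ℝ) :
    AnalyticOnNhd ℝ (genPoissonKernel α r β) (Set.Ioo 0 (2*π)) := by
  intro t ht
  set g : ℝ → ℝ := fun x => Real.exp (-α * x ^ r) with hg
  have hs : Summable fun k : ℕ => |g ((k:ℝ)+1)| := by
    have := a_summable hα hr0 1
    refine this.congr (fun k => ?_)
    simp [hg]
  have hb : ∀ j x, 0 < x → |Bop^[j] g x| ≤ (1/2)^j * g x :=
    fun j x hx => (CMn.expo hα hr0 hr1 j).bop_bound x hx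
  set H : ℂ → ℂ := fun w => ∑' j, (Bop^[j] g 1 : ℂ) * w^j with hH
  set W : ℂ → ℂ := fun z => z / (1-z/2)
  have hE : AnalyticAt ℝ (fun t : ℝ => Complex.exp (Complex.I * t)) t := by
    have : AnalyticAt ℝ (fun t : ℝ => (t:ℂ)) t := Complex.ofRealCLM.analyticAt t
    exact (((analyticAt_const.mul analyticAt_id).cexp (x := (t:ℂ)) (f := fun z : ℂ => Complex.I * z)).restrictScalars (𝕜 := ℝ)).comp this
  have hE' : AnalyticAt ℝ (fun t : ℝ => Complex.exp (Complex.I * ((1 * t - β*π/2 : ℝ) : ℂ))) t := by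
    have : AnalyticAt ℝ (fun t : ℝ => ((1 * t - β*π/2 : ℝ):ℂ)) t :=
      (Complex.ofRealCLM.analyticAt _).comp ((analyticAt_const.mul analyticAt_id).sub analyticAt_const)
    exact (((analyticAt_const.mul analyticAt_id).cexp (x := ((1 * t - β*π/2 : ℝ):ℂ)) (f := fun z : ℂ => Complex.I * z)).restrictScalars (𝕜 := ℝ)).comp_of_eq this rfl
  have hwt := norm_w_lt ht
  have hne : (1 - Complex.exp (Complex.I * t)/2) ≠ 0 := by
    intro h
    have h2 : Complex.exp (Complex.I * t) = 2 := by linear_combination -2 * h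
    have hn : ‖Complex.exp (Complex.I * t)‖ = 1 := by
      rw [mul_comm]; exact Complex.norm_exp_ofReal_mul_I t
    rw [h2] at hn; norm_num at hn
  have hG : AnalyticAt ℂ (fun z => (1 - z/2)⁻¹ * H (z / (1 - z/2))) (Complex.exp (Complex.I * t)) := by
    have h1 : AnalyticAt ℂ (fun z : ℂ => 1 - z/2) (Complex.exp (Complex.I * t)) :=
      analyticAt_const.sub (analyticAt_id.div_const)
    refine (h1.inv hne).mul ?_
    have hHa : AnalyticAt ℂ H (Complex.exp (Complex.I * t) / (1 - Complex.exp (Complex.I * t)/2)) := by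
      refine H_analytic (C := g 1) (fun j => ?_) hwt
      rw [Complex.norm_real, Real.norm_eq_abs, mul_comm]
      exact hb j 1 one_pos
    exact hHa.comp_of_eq (analyticAt_id.div h1 hne) rfl
  have hfin : AnalyticAt ℝ (fun t : ℝ => (Complex.exp (Complex.I * ((1 * t - β*π/2 : ℝ) : ℂ)) *
      ((1 - Complex.exp (Complex.I * t)/2)⁻¹ * H (Complex.exp (Complex.I * t) / (1 - Complex.exp (Complex.I * t)/2)))).re) t := by
    have h1 := (hG.restrictScalars (𝕜 := ℝ)).comp_of_eq hE rfl
    exact (Complex.reCLM.analyticAt _).comp (hE'.mul h1)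
  refine hfin.congr ?_
  filter_upwards [isOpen_Ioo.mem_nhds ht] with u hu
  rw [gen_eq hα hr0, Fn, Pn_one_eq, Fg_eq hs hb (le_of_eq ?_) (norm_w_lt hu)]
  · simp [hH]
  · rw [mul_comm]; exact Complex.norm_exp_ofReal_mul_I u

lemma Pn_hasDerivAt {α r : ℝ} (hα : 0 < α) (hr0 : 0 < r) (n : ℕ) (t : ℝ) :
    HasDerivAt (Pn α r n) (∑' k : ℕ, (Real.exp (-α * ((k + n : ℕ) : ℝ) ^ r) : ℂ) *
      (Complex.exp (Complex.I * (k : ℂ) * (t : ℂ)) * (Complex.I * k))) t := by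
  refine hasDerivAt_tsum (u := fun k : ℕ => (k : ℝ) * Real.exp (-α * ((k + n : ℕ) : ℝ) ^ r))
    (ka_summable hα hr0 n)
    (g := fun (k:ℕ) (t:ℝ) => (Real.exp (-α * ((k + n : ℕ) : ℝ) ^ r) : ℂ) *
      Complex.exp (Complex.I * (k : ℂ) * (t : ℂ)))
    (g' := fun (k:ℕ) (t:ℝ) => (Real.exp (-α * ((k + n : ℕ) : ℝ) ^ r) : ℂ) *
      (Complex.exp (Complex.I * (k : ℂ) * (t : ℂ)) * (Complex.I * k))) (y₀ := 0) ?_ ?_ ?_ t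
  · intro k y
    have h1 : HasDerivAt (fun t : ℝ => Complex.I * (k : ℂ) * (t : ℂ)) (Complex.I * (k : ℂ)) y := by
      simpa using (Complex.ofRealCLM.hasDerivAt (x := y)).const_mul (Complex.I * (k : ℂ))
    exact (h1.cexp).const_mul _
  · intro k y
    rw [norm_mul, norm_mul, Complex.norm_real, show Complex.I * (k:ℂ) * (y:ℂ) = ((k * y : ℝ) : ℂ) * Complex.I by push_cast; ring,
      Complex.norm_exp_ofReal_mul_I]
    simp [mul_comm]
  · exact (Pn_hasSum hα hr0 n 0).summable

lemma Pn_contDeriv {α r : ℝ} (hα : 0 < α) (hr0 : 0 < r) (n : ℕ) : Continuous (deriv (Pn α r n)) := by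
  rw [funext fun t => (Pn_hasDerivAt hα hr0 n t).deriv]
  refine continuous_tsum (u := fun k : ℕ => (k : ℝ) * Real.exp (-α * ((k + n : ℕ) : ℝ) ^ r)) ?_ 
    (ka_summable hα hr0 n) ?_
  · intro k; fun_prop
  · intro k y
    rw [norm_mul, norm_mul, Complex.norm_real, show Complex.I * (k:ℂ) * (y:ℂ) = ((k * y : ℝ) : ℂ) * Complex.I by push_cast; ring,
      Complex.norm_exp_ofReal_mul_I]
    simp [mul_comm]

lemma Pn_diff {α r : ℝ} (hα : 0 < α) (hr0 : 0 < r) (n : ℕ) : Differentiable ℝ (Pn α r n) :=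
  fun t => (Pn_hasDerivAt hα hr0 n t).differentiableAt

lemma Pn_cont {α r : ℝ} (hα : 0 < α) (hr0 : 0 < r) (n : ℕ) : Continuous (Pn α r n) :=
  (Pn_diff hα hr0 n).continuous

lemma Pn_periodic (α r : ℝ) (n : ℕ) : Function.Periodic (Pn α r n) (2 * π) := by
  intro t
  rw [Pn, Pn]
  congr 1; ext k
  rw [show Complex.I * (k:ℂ) * ((t + 2 * π : ℝ):ℂ) = Complex.I * (k:ℂ) * (t:ℂ) + k * (2 * π * Complex.I) by
    push_cast; ring, Complex.exp_add, Complex.exp_nat_mul_two_pi_mul_I, mul_one]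

lemma Pn_neg (α r : ℝ) (n : ℕ) (t : ℝ) : Pn α r n (-t) = (starRingEnd ℂ) (Pn α r n t) := by
  rw [Pn, Pn, Complex.conj_tsum]
  congr 1; ext k
  rw [map_mul, ← Complex.exp_conj, Complex.conj_ofReal]
  simp

lemma a_strictAnti {α r : ℝ} (hα : 0 < α) (hr0 : 0 < r) {j k : ℕ} (h : j < k) :
    Real.exp (-α * (k : ℝ) ^ r) < Real.exp (-α * (j : ℝ) ^ r) := by
  apply Real.exp_lt_exp.2
  have : (j:ℝ)^r < (k:ℝ)^r := Real.rpow_lt_rpow (by positivity) (by exact_mod_cast h) hr0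
  nlinarith

lemma Pn_ne {α r : ℝ} (hα : 0 < α) (hr0 : 0 < r) (n : ℕ) (t : ℝ) : Pn α r n t ≠ 0 := by
  intro h0
  set a : ℕ → ℝ := fun k => Real.exp (-α * ((k + n : ℕ) : ℝ) ^ r) with ha
  have hsa : Summable a := a_summable hα hr0 n
  have hsa1 : Summable (fun k => a (k+1)) := (summable_nat_add_iff 1).2 hsa
  have hre : HasSum (fun k : ℕ => a k * Real.cos (k * t)) 0 := by
    have h := Complex.reCLM.hasSum (Pn_hasSum hα hr0 n t)
    rw [h0] at h
    simp only [Complex.reCLM_apply, Complex.zero_re] at h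
    convert h using 1
    funext k
    rw [Complex.re_ofReal_mul, show Complex.I * (k:ℂ) * (t:ℂ) = ((k * t : ℝ) : ℂ) * Complex.I by push_cast; ring,
      Complex.exp_ofReal_mul_I_re]
  -- multiply by exp(I t)
  have hre2 : HasSum (fun k : ℕ => a k * Real.cos ((k+1 : ℕ) * t)) 0 := by
    have h := Complex.reCLM.hasSum ((Pn_hasSum hα hr0 n t).mul_left (Complex.exp (Complex.I * t)))
    rw [h0, mul_zero] at h
    simp only [Complex.reCLM_apply, Complex.zero_re] at h
    convert h using 1
    funext k
    rw [mul_left_comm, ← Complex.exp_add, Complex.re_ofReal_mul, show Complex.I * (t:ℂ) + Complex.I * (k:ℂ) * (t:ℂ) = (((k+1:ℕ) * t : ℝ) : ℂ) * Complex.I by push_cast; ring,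
      Complex.exp_ofReal_mul_I_re]
  have hre3 : HasSum (fun k : ℕ => a (k+1) * Real.cos ((k+1 : ℕ) * t)) (0 - a 0) := by
    have := (hasSum_nat_add_iff' 1).2 hre
    simpa using this
  have h4 := hre2.sub hre3
  have h5 : HasSum (fun k => a k - a (k+1)) (a 0) := by
    have h6 := hsa.hasSum.sub hsa1.hasSum
    rw [hsa.tsum_eq_zero_add] at h6
    simpa using h6
  have h7 := h5.sub h4
  have h8 : HasSum (fun k : ℕ => (a k - a (k+1)) * (1 - Real.cos ((k+1:ℕ) * t))) 0 := by
    rw [show a 0 - (0 - (0 - a 0)) = 0 by ring] at h7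
    have e : (fun k : ℕ => (a k - a (k+1)) * (1 - Real.cos ((k+1:ℕ) * t))) = fun b : ℕ =>
        a b - a (b + 1) - (a b * cos ((b + 1 : ℕ) * t) - a (b + 1) * cos ((b + 1 : ℕ) * t)) := by
      funext k; ring
    rw [e]; exact h7
  have hd : ∀ k, 0 < a k - a (k+1) := fun k => by
    have := a_strictAnti hα hr0 (j := k + n) (k := k + 1 + n) (by omega)
    simp only [ha]; linarith
  have h9 := (hasSum_zero_iff_of_nonneg (fun k => mul_nonneg (hd k).le (by
    have := Real.cos_le_one ((k+1:ℕ) * t); linarith))).1 h8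
  have h10 := congrFun h9 0
  simp only [Pi.zero_apply, mul_eq_zero, (hd 0).ne', false_or] at h10
  have hcos : Real.cos t = 1 := by simp at h10; linarith
  obtain ⟨m, hm⟩ := (Real.cos_eq_one_iff t).1 hcos
  have h11 : ∀ k : ℕ, Real.cos (k * t) = 1 := by
    intro k
    rw [← hm]
    have := Real.cos_int_mul_two_pi (k * m)
    push_cast at this
    rw [← this]; ring_nf
  simp only [h11, mul_one] at hre
  have := (hasSum_zero_iff_of_nonneg (fun k => (Real.exp_pos _).le)).1 hre
  exact (Real.exp_pos _).ne' (congrFun this 0)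

lemma Mn_bdd {α r : ℝ} (hα : 0 < α) (hr0 : 0 < r) (n : ℕ) :
    BddAbove (Set.range fun t : ℝ => ‖deriv (Pn α r n) t‖ / ‖Pn α r n t‖) := by
  set q := fun t : ℝ => ‖deriv (Pn α r n) t‖ / ‖Pn α r n t‖
  have hc : Continuous q := (Pn_contDeriv hα hr0 n).norm.div (Pn_cont hα hr0 n).norm
    (fun t => norm_ne_zero_iff.2 (Pn_ne hα hr0 n t))
  have hp : Function.Periodic q (2 * π) := by
    intro t
    have : deriv (Pn α r n) (t + 2 * π) = deriv (Pn α r n) t := by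
      rw [← deriv_comp_add_const]
      congr 1
      funext u; exact Pn_periodic α r n u
    simp only [q, this, Pn_periodic α r n t]
  exact (hp.compact_of_continuous Real.two_pi_pos.ne' hc).bddAbove

lemma Pn_deriv_le {α r : ℝ} (hα : 0 < α) (hr0 : 0 < r) (n : ℕ) (t : ℝ) :
    ‖deriv (Pn α r n) t‖ ≤ Mn α r n * ‖Pn α r n t‖ := by
  have := le_ciSup (Mn_bdd hα hr0 n) t
  rwa [div_le_iff₀ (norm_pos_iff.2 (Pn_ne hα hr0 n t))] at this

lemma Mn_pos {α r : ℝ} (hα : 0 < α) (hr0 : 0 < r) (n : ℕ) : 0 < Mn α r n := by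
  by_contra hM
  push Not at hM
  have hz : ∀ t, deriv (Pn α r n) t = 0 := fun t => by
    have h1 := Pn_deriv_le hα hr0 n t
    have : Mn α r n * ‖Pn α r n t‖ ≤ 0 := mul_nonpos_of_nonpos_of_nonneg hM (norm_nonneg _)
    exact norm_le_zero_iff.1 (h1.trans this)
  have hc := is_const_of_deriv_eq_zero (Pn_diff hα hr0 n) hz 0 π
  have key : ∀ t, HasSum (fun k : ℕ => Real.exp (-α * ((k + n : ℕ) : ℝ) ^ r) * Real.cos (k * t)) (Pn α r n t).re := by
    intro t
    have h := Complex.reCLM.hasSum (Pn_hasSum hα hr0 n t)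
    simp only [Complex.reCLM_apply] at h
    convert h using 1
    funext k
    rw [Complex.re_ofReal_mul, show Complex.I * (k:ℂ) * (t:ℂ) = ((k * t : ℝ) : ℂ) * Complex.I by push_cast; ring,
      Complex.exp_ofReal_mul_I_re]
  have h := (key 0).sub (key π)
  rw [hc, sub_self] at h
  have h2 := (hasSum_zero_iff_of_nonneg (fun k => by
    rw [← mul_sub]
    have := Real.cos_le_one (k * π)
    exact mul_nonneg (Real.exp_pos _).le (by simp [this]))).1 h
  have h3 := congrFun h2 1
  simp at h3

lemma Pn_shift {α r : ℝ} (hα : 0 < α) (hr0 : 0 < r) (n : ℕ) (t : ℝ) {h : ℝ} (hh : 0 ≤ h) :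
    ‖Pn α r n (t + h) - Pn α r n t‖ ≤ (Real.exp (Mn α r n * h) - 1) * ‖Pn α r n t‖ := by
  have hM := Mn_pos hα hr0 n
  have := norm_le_gronwallBound_of_norm_deriv_right_le
    (f := fun u => Pn α r n (t + u) - Pn α r n t) (f' := fun u => deriv (Pn α r n) (t + u))
    (δ := 0) (K := Mn α r n) (ε := Mn α r n * ‖Pn α r n t‖) (a := 0) (b := h) ?_ ?_ ?_ ?_ h ⟨hh, le_rfl⟩
  · refine this.trans (le_of_eq ?_)
    rw [gronwallBound_of_K_ne_0 hM.ne', sub_zero]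
    field_simp
    ring
  · have := Pn_cont hα hr0 n
    fun_prop
  · intro x hx
    have h1 := (Pn_diff hα hr0 n (t + x)).hasDerivAt
    exact ((h1.comp_const_add t x).sub_const _).hasDerivWithinAt
  · simp
  · intro x hx
    refine (Pn_deriv_le hα hr0 n _).trans ?_
    rw [← mul_add]
    gcongr
    have := norm_add_le (Pn α r n (t + x) - Pn α r n t) (Pn α r n t)
    simpa using this

lemma Fn_cont {α r : ℝ} (hα : 0 < α) (hr0 : 0 < r) (n : ℕ) (θ : ℝ) : Continuous (Fn α r n θ) := by
  have := Pn_cont hα hr0 n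
  unfold Fn
  fun_prop

lemma Fn_periodic (α r : ℝ) (n : ℕ) (θ : ℝ) : Function.Periodic (Fn α r n θ) (2 * π) := by
  intro t
  rw [Fn, Fn, Pn_periodic, show Complex.I * ((n * (t + 2*π) - θ : ℝ) : ℂ) = Complex.I * ((n * t - θ : ℝ) : ℂ) + n * (2 * π * Complex.I) by
    push_cast; ring, Complex.exp_add, Complex.exp_nat_mul_two_pi_mul_I, mul_one]

lemma Fn_neg (α r : ℝ) (n : ℕ) (θ t : ℝ) : Fn α r n θ (-t) = Fn α r n (-θ) t := by
  rw [Fn, Fn, Pn_neg, ← Complex.conj_re]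
  congr 1
  rw [map_mul, Complex.conj_conj, ← Complex.exp_conj, map_mul, Complex.conj_ofReal, Complex.conj_I]
  congr 2
  push_cast; ring

lemma Fn_abs_le (α r : ℝ) (n : ℕ) (θ t : ℝ) : |Fn α r n θ t| ≤ ‖Pn α r n t‖ := by
  refine (Complex.abs_re_le_norm _).trans ?_
  rw [norm_mul, mul_comm Complex.I, Complex.norm_exp_ofReal_mul_I, one_mul]

lemma Fn_shift {α r : ℝ} (hα : 0 < α) (hr0 : 0 < r) {n : ℕ} (hn : 1 ≤ n) (θ t : ℝ) {s : ℝ} (hs : 0 ≤ s) :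
    |Fn α r n θ (t + s / n) - Fn α r n (θ - s) t| ≤ (Real.exp (Mn α r n * (s / n)) - 1) * ‖Pn α r n t‖ := by
  have hn' : (n:ℝ) ≠ 0 := by positivity
  refine le_trans ?_ (Pn_shift hα hr0 n t (h := s / n) (by positivity))
  rw [Fn, Fn, ← Complex.sub_re]
  refine (Complex.abs_re_le_norm _).trans ?_
  rw [show (n * (t + s / n) - θ : ℝ) = n * t - (θ - s) by field_simp; ring, ← mul_sub, norm_mul,
    mul_comm Complex.I, Complex.norm_exp_ofReal_mul_I, one_mul]

noncomputable def tau (b h t : ℝ) : ℝ := toIocMod Real.two_pi_pos b (t + h)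

lemma tau_mp (a a' b b' h : ℝ) (ha : a' = a + 2 * π) (hb : b' = b + 2 * π) :
    MeasurePreserving (tau b h) (volume.restrict (Set.Ioc a a')) (volume.restrict (Set.Ioc b b')) := by
  subst ha hb
  have : Fact (0 < 2 * π) := ⟨Real.two_pi_pos⟩
  have h1 := AddCircle.measurePreserving_mk (2 * π) a
  have h2 : MeasurePreserving (fun x : AddCircle (2*π) => x + (h : AddCircle (2*π))) volume volume :=
    measurePreserving_add_right volume _
  have h3 := AddCircle.measurePreserving_equivIoc (2 * π) (a := b)
  have h4 : MeasurePreserving (Subtype.val : Set.Ioc b (b + 2*π) → ℝ) (Measure.comap Subtype.val volume)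
      (volume.restrict (Set.Ioc b (b + 2*π))) := measurePreserving_subtype_coe measurableSet_Ioc
  exact h4.comp (h3.comp (h2.comp h1))

lemma periodic_tau {E : Type*} {g : ℝ → E} (hg : Function.Periodic g (2 * π)) (b h t : ℝ) :
    g (tau b h t) = g (t + h) := by
  rw [tau, toIocMod, hg.sub_zsmul_eq]

lemma per_aesm {E : Type*} [NormedAddCommGroup E] {g : ℝ → E} (hg : Function.Periodic g (2 * π))
    {a a' b b' : ℝ} (h : ℝ) (ha : a' = a + 2 * π) (hb : b' = b + 2 * π)
    (hm : AEStronglyMeasurable g (volume.restrict (Set.Ioc b b'))) :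
    AEStronglyMeasurable (fun t => g (t + h)) (volume.restrict (Set.Ioc a a')) := by
  have := hm.comp_measurePreserving (tau_mp a a' b b' h ha hb)
  rwa [show g ∘ tau b h = fun t => g (t + h) from funext fun t => periodic_tau hg b h t] at this

lemma per_eLpNorm {E : Type*} [NormedAddCommGroup E] {g : ℝ → E} (hg : Function.Periodic g (2 * π))
    {a a' b b' : ℝ} (h : ℝ) (ha : a' = a + 2 * π) (hb : b' = b + 2 * π) (p : ℝ≥0∞)
    (hm : AEStronglyMeasurable g (volume.restrict (Set.Ioc b b'))) :
    eLpNorm (fun t => g (t + h)) p (volume.restrict (Set.Ioc a a')) =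
      eLpNorm g p (volume.restrict (Set.Ioc b b')) := by
  rw [← eLpNorm_comp_measurePreserving hm (tau_mp a a' b b' h ha hb),
    show g ∘ tau b h = fun t => g (t + h) from funext fun t => periodic_tau hg b h t]

lemma per_integral {g : ℝ → ℝ} (hg : Function.Periodic g (2 * π))
    {a a' b b' : ℝ} (h : ℝ) (ha : a' = a + 2 * π) (hb : b' = b + 2 * π)
    (hm : AEStronglyMeasurable g (volume.restrict (Set.Ioc b b'))) :
    ∫ t in Set.Ioc a a', g (t + h) = ∫ t in Set.Ioc b b', g t := by
  have hmp := tau_mp a a' b b' h ha hb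
  rw [← hmp.map_eq, integral_map hmp.aemeasurable (by rwa [hmp.map_eq])]
  simp only [periodic_tau hg]

lemma int_cos (m : ℤ) (c : ℝ) : ∫ u in (-π)..π, Real.cos (m * u + c) =
    if m = 0 then 2 * π * Real.cos c else 0 := by
  split_ifs with h
  · subst h; simp; left; ring
  · have hm : (m:ℝ) ≠ 0 := by exact_mod_cast h
    rw [intervalIntegral.integral_comp_mul_add (f := Real.cos) hm c, integral_cos,
      show (m:ℝ) * π + c = (m * (-π) + c) + m * (2 * π) by ring, Real.sin_add_int_mul_two_pi]
    simp

lemma ortho {j : ℕ} (hj : 1 ≤ j) (k : ℕ) (c x : ℝ) :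
    ∫ u in (-π)..π, Real.cos (j * u - c) * Real.cos (k * (x - u)) =
      if j = k then π * Real.cos (k * x - c) else 0 := by
  have e : ∀ u : ℝ, Real.cos (j * u - c) * Real.cos (k * (x - u)) =
      (1/2) * Real.cos (((j - k : ℤ) : ℝ) * u + (k * x - c)) + (1/2) * Real.cos (((j + k : ℤ) : ℝ) * u + (- c - k * x)) := by
    intro u
    have h1 := Real.cos_add (j * u - c) (k * (x - u))
    have h2 := Real.cos_sub (j * u - c) (k * (x - u))
    rw [show ((j - k : ℤ) : ℝ) * u + (k * x - c) = (j * u - c) + (k * (x - u)) by push_cast; ring,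
      show ((j + k : ℤ) : ℝ) * u + (- c - k * x) = (j * u - c) - (k * (x - u)) by push_cast; ring, h1, h2]
    ring
  simp only [e]
  rw [intervalIntegral.integral_add, intervalIntegral.integral_const_mul, intervalIntegral.integral_const_mul,
    int_cos, int_cos]
  · rw [if_neg (show ¬ ((j:ℤ) + k = 0) by omega)]
    by_cases h : j = k
    · rw [if_pos (by omega), if_pos h]; ring
    · rw [if_neg (by omega), if_neg h]; ring
  · exact Continuous.intervalIntegrable (by fun_prop) _ _
  · exact Continuous.intervalIntegrable (by fun_prop) _ _

noncomputable def Tj (φ : ℝ → ℝ) (c : ℝ) (j : ℕ) (x : ℝ) : ℝ :=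
  ∫ t in (-π)..π, Real.cos (j * (x - t) - c) * φ t

lemma Tj_eq {φ : ℝ → ℝ} (hφ : IntervalIntegrable φ volume (-π) π) (c : ℝ) (j : ℕ) (x : ℝ) :
    Tj φ c j x = (∫ t in (-π)..π, Real.cos (j * t) * φ t) * Real.cos (j * x - c) +
      (∫ t in (-π)..π, Real.sin (j * t) * φ t) * Real.cos (j * x - (c + π/2)) := by
  rw [Tj, ← intervalIntegral.integral_mul_const, ← intervalIntegral.integral_mul_const,
    ← intervalIntegral.integral_add]
  · congr 1; ext t
    rw [show j * x - (c + π/2) = (j * x - c) - π/2 by ring, Real.cos_sub_pi_div_two,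
      show j * (x - t) - c = (j * x - c) - j * t by ring, Real.cos_sub]
    ring
  · exact (hφ.continuousOn_mul (by fun_prop)).mul_const _
  · exact (hφ.continuousOn_mul (by fun_prop)).mul_const _

lemma Tj_cont {φ : ℝ → ℝ} (hφ : IntervalIntegrable φ volume (-π) π) (c : ℝ) (j : ℕ) :
    Continuous (Tj φ c j) := by
  rw [funext (Tj_eq hφ c j)]
  fun_prop

lemma Tj_int {φ : ℝ → ℝ} (hφ : IntervalIntegrable φ volume (-π) π) (c : ℝ) {j : ℕ} (hj : 1 ≤ j) (k : ℕ) (x : ℝ) :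
    ∫ u in (-π)..π, Tj φ c j u * Real.cos (k * (x - u)) = if j = k then π * Tj φ c k x else 0 := by
  simp only [Tj_eq hφ, add_mul, mul_assoc]
  rw [intervalIntegral.integral_add, intervalIntegral.integral_const_mul, intervalIntegral.integral_const_mul,
    ortho hj, ortho hj]
  · split_ifs with h
    · subst h; ring
    · ring
  · exact Continuous.intervalIntegrable (by fun_prop) _ _
  · exact Continuous.intervalIntegrable (by fun_prop) _ _

lemma Tj_bound {φ : ℝ → ℝ} (hφ : IntervalIntegrable φ volume (-π) π) (c : ℝ) (j : ℕ) (x : ℝ) :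
    |Tj φ c j x| ≤ ∫ t in (-π)..π, |φ t| := by
  rw [Tj, ← Real.norm_eq_abs]
  refine intervalIntegral.norm_integral_le_of_norm_le (by linarith [Real.pi_pos]) ?_ hφ.abs
  refine Eventually.of_forall (fun t _ => ?_)
  rw [norm_mul, Real.norm_eq_abs, Real.norm_eq_abs]
  exact mul_le_of_le_one_left (abs_nonneg _) (Real.abs_cos_le_one _)

lemma conv_hasSum {α r : ℝ} (hα : 0 < α) (hr0 : 0 < r) {φ : ℝ → ℝ}
    (hφ : IntervalIntegrable φ volume (-π) π) (n : ℕ) (θ x : ℝ) :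
    HasSum (fun k : ℕ => Real.exp (-α * ((k + n : ℕ) : ℝ) ^ r) * Tj φ θ (k + n) x)
      (∫ t in (-π)..π, Fn α r n θ (x - t) * φ t) := by
  have hs := a_summable hα hr0 n
  have := intervalIntegral.hasSum_integral_of_dominated_convergence (μ := volume) (a := -π) (b := π)
    (F := fun (k : ℕ) t => Real.exp (-α * ((k + n : ℕ) : ℝ) ^ r) * (Real.cos (((k + n : ℕ):ℝ) * (x - t) - θ) * φ t))
    (f := fun t => Fn α r n θ (x - t) * φ t)
    (fun k t => Real.exp (-α * ((k + n : ℕ) : ℝ) ^ r) * |φ t|) ?_ ?_ ?_ ?_ ?_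
  · simp only [intervalIntegral.integral_const_mul] at this
    exact this
  · intro k
    exact (((hφ.continuousOn_mul (g := fun t => Real.cos (((k + n : ℕ):ℝ) * (x - t) - θ)) (by fun_prop)).const_mul _).def'.aestronglyMeasurable)
  · intro k
    refine Eventually.of_forall (fun t _ => ?_)
    rw [norm_mul, norm_mul, Real.norm_eq_abs, Real.norm_eq_abs, Real.norm_eq_abs, Real.abs_exp]
    gcongr
    exact mul_le_of_le_one_left (abs_nonneg _) (Real.abs_cos_le_one _)
  · exact Eventually.of_forall (fun t _ => hs.mul_right _)
  · simp only [tsum_mul_right]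
    exact hφ.abs.const_mul _
  · refine Eventually.of_forall (fun t _ => ?_)
    have := (Fn_hasSum hα hr0 n θ (x - t)).mul_right (φ t)
    simpa only [mul_assoc] using this

lemma conv_cont {α r : ℝ} (hα : 0 < α) (hr0 : 0 < r) {φ : ℝ → ℝ}
    (hφ : IntervalIntegrable φ volume (-π) π) (n : ℕ) (θ : ℝ) :
    Continuous (fun x => ∫ t in (-π)..π, Fn α r n θ (x - t) * φ t) := by
  rw [funext fun x => (conv_hasSum hα hr0 hφ n θ x).tsum_eq.symm]
  refine continuous_tsum (fun k => (Tj_cont hφ _ _).const_mul _)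
    ((a_summable hα hr0 n).mul_right (∫ t in (-π)..π, |φ t|)) (fun k x => ?_)
  rw [norm_mul, Real.norm_eq_abs, Real.norm_eq_abs, Real.abs_exp]
  gcongr
  exact Tj_bound hφ _ _ _

lemma conv_fourier {α r : ℝ} (hα : 0 < α) (hr0 : 0 < r) {φ : ℝ → ℝ}
    (hφ : IntervalIntegrable φ volume (-π) π) (θ x : ℝ) (k : ℕ) :
    ∫ u in (-π)..π, (∫ t in (-π)..π, Fn α r 1 θ (u - t) * φ t) * Real.cos (k * (x - u)) =
      if k = 0 then 0 else π * (Real.exp (-α * (k : ℝ) ^ r) * Tj φ θ k x) := by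
  have hs := (a_summable hα hr0 1).mul_right (∫ t in (-π)..π, |φ t|)
  have := intervalIntegral.hasSum_integral_of_dominated_convergence (μ := volume) (a := -π) (b := π)
    (F := fun (j : ℕ) u => Real.exp (-α * ((j + 1 : ℕ) : ℝ) ^ r) * (Tj φ θ (j + 1) u * Real.cos (k * (x - u))))
    (f := fun u => (∫ t in (-π)..π, Fn α r 1 θ (u - t) * φ t) * Real.cos (k * (x - u)))
    (fun j u => Real.exp (-α * ((j + 1 : ℕ) : ℝ) ^ r) * ∫ t in (-π)..π, |φ t|) ?_ ?_ ?_ ?_ ?_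
  · simp only [intervalIntegral.integral_const_mul] at this
    rw [← this.tsum_eq]
    simp only [Tj_int hφ θ (Nat.le_add_left 1 _)]
    split_ifs with hk
    · subst hk; simp
    · obtain ⟨m, rfl⟩ := Nat.exists_eq_succ_of_ne_zero hk
      rw [tsum_eq_single m]
      · simp; ring
      · intro j hj
        rw [if_neg (by simpa using hj), mul_zero]
  · intro j
    have := Tj_cont hφ θ (j+1)
    exact Continuous.aestronglyMeasurable (by fun_prop)
  · intro j
    refine Eventually.of_forall (fun u _ => ?_)
    rw [norm_mul, norm_mul, Real.norm_eq_abs, Real.norm_eq_abs, Real.norm_eq_abs, Real.abs_exp]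
    gcongr
    exact (mul_le_of_le_one_right (abs_nonneg _) (Real.abs_cos_le_one _)).trans (Tj_bound hφ _ _ _)
  · exact Eventually.of_forall (fun t _ => hs)
  · exact intervalIntegrable_const
  · refine Eventually.of_forall (fun u _ => ?_)
    have := (conv_hasSum hα hr0 hφ 1 θ u).mul_right (Real.cos (k * (x - u)))
    simpa only [mul_assoc] using this

lemma four_term {f : ℝ → ℝ} (hf : Continuous f) (k : ℕ) (x : ℝ) :
    fourierCoefA f k * Real.cos (k * x) + fourierCoefB f k * Real.sin (k * x) =
      (1 / π) * ∫ u in (-π)..π, f u * Real.cos (k * (x - u)) := by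
  have : ∀ u : ℝ, f u * Real.cos (k * (x - u)) = f u * Real.cos (k * u) * Real.cos (k * x) +
      f u * Real.sin (k * u) * Real.sin (k * x) := by
    intro u; rw [mul_sub, Real.cos_sub]; ring
  simp only [this]
  rw [intervalIntegral.integral_add, intervalIntegral.integral_mul_const, intervalIntegral.integral_mul_const,
    fourierCoefA, fourierCoefB]
  · ring
  · exact Continuous.intervalIntegrable (by fun_prop) _ _
  · exact Continuous.intervalIntegrable (by fun_prop) _ _

lemma dev_eq {α r : ℝ} (hα : 0 < α) (hr0 : 0 < r) {φ f : ℝ → ℝ} {a₀ θ : ℝ}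
    (hφ : IntervalIntegrable φ volume (-π) π)
    (hf : ∀ x, f x = a₀ / 2 + (1 / π) * ∫ t in (-π)..π, Fn α r 1 θ (x - t) * φ t)
    {n : ℕ} (hn : 1 ≤ n) (x : ℝ) :
    f x - fourierSum (n - 1) f x = (1 / π) * ∫ t in (-π)..π, Fn α r n θ (x - t) * φ t := by
  obtain ⟨m, rfl⟩ : ∃ m, n = m + 1 := ⟨n - 1, by omega⟩
  have hc := conv_cont hα hr0 hφ 1 θ
  have hfc : Continuous f := by rw [funext hf]; fun_prop
  have hpi := Real.pi_ne_zero
  have key : ∀ k : ℕ, ∫ u in (-π)..π, f u * Real.cos (k * (x - u)) =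
      if k = 0 then a₀ * π else Real.exp (-α * (k : ℝ) ^ r) * Tj φ θ k x := by
    intro k
    have h1 : ∀ u, f u * Real.cos (k * (x - u)) = (a₀/2) * Real.cos (k * (x - u)) +
      (1/π) * ((∫ t in (-π)..π, Fn α r 1 θ (u - t) * φ t) * Real.cos (k * (x - u))) := by
      intro u; rw [hf]; ring
    simp only [h1]
    rw [intervalIntegral.integral_add, intervalIntegral.integral_const_mul, intervalIntegral.integral_const_mul,
      conv_fourier hα hr0 hφ]
    · have h2 := int_cos (-(k:ℤ)) (k * x)
      rw [show (fun u : ℝ => Real.cos (((-(k:ℤ) : ℤ):ℝ) * u + k * x)) = fun u => Real.cos (k * (x - u)) by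
        funext u; congr 1; push_cast; ring] at h2
      rw [h2]
      split_ifs with h3 h4 h4
      · subst h4; simp; ring
      · simp at h3; exact absurd h3 h4
      · exact absurd (by simp [h4]) h3
      · field_simp; ring
    · exact Continuous.intervalIntegrable (by fun_prop) _ _
    · exact Continuous.intervalIntegrable (by fun_prop) _ _
  have h0 : fourierCoefA f 0 = a₀ := by
    have := key 0
    simp at this
    rw [fourierCoefA]; simp [this]; field_simp
  have hS := (hasSum_nat_add_iff' m).2 (conv_hasSum hα hr0 hφ 1 θ x)
  have hS2 := conv_hasSum hα hr0 hφ (m+1) θ x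
  have hS3 := hS.unique (by simpa only [add_assoc] using hS2)
  rw [← hS3, fourierSum, h0, hf x]
  simp only [four_term hfc, key]
  rw [Nat.add_sub_cancel]
  have : ∑ k ∈ Finset.Icc 1 m, (1/π * if k = 0 then a₀ * π else Real.exp (-α * (k : ℝ) ^ r) * Tj φ θ k x)
      = 1/π * ∑ i ∈ Finset.range m, Real.exp (-α * ((i + 1 : ℕ) : ℝ) ^ r) * Tj φ θ (i+1) x := by
    rw [← Finset.mul_sum]
    congr 1
    rw [Finset.range_eq_Ico, Finset.sum_Ico_add' (fun k : ℕ => Real.exp (-α * (k : ℝ) ^ r) * Tj φ θ k x) 0 m 1]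
    apply Finset.sum_congr
    · ext; simp
    · intro k hk
      rw [if_neg]
      simp at hk; omega
  rw [this]
  ring

/-- the basic measure -/
noncomputable abbrev mu : Measure ℝ := volume.restrict (Set.Ioc (-π) π)

lemma pi_eq' : π = -π + 2 * π := by ring
lemma tp_eq : 2 * π = 0 + 2 * π := by ring

lemma ae_shift {P : ℝ → Prop} (hP : Function.Periodic P (2 * π))
    (h : ∀ᵐ y ∂(volume.restrict (Set.Ioo 0 (2*π))), P y) (x : ℝ) : ∀ᵐ t ∂mu, P (t + x) := by
  rw [Measure.restrict_congr_set Ioo_ae_eq_Ioc] at h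
  have := (tau_mp (-π) π 0 (2*π) x pi_eq' tp_eq).quasiMeasurePreserving.ae h
  filter_upwards [this] with t ht
  rwa [periodic_tau hP] at ht

lemma gen_exists {α r : ℝ} (hα : 0 < α) (hr0 : 0 < r) (β : ℝ) :
    ∃ t ∈ Set.Ioo 0 (2*π), genPoissonKernel α r β t ≠ 0 := by
  by_contra hcon
  push Not at hcon
  set θ := β * π / 2 with hθ
  have h1 : ∀ᵐ y ∂(volume.restrict (Set.Ioo 0 (2*π))), Fn α r 1 θ y = 0 := by
    refine (ae_restrict_iff' measurableSet_Ioo).2 (Eventually.of_forall fun y hy => ?_)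
    rw [← gen_eq hα hr0]; exact hcon y hy
  have h2 := ae_shift (P := fun y => Fn α r 1 θ y = 0)
    (fun y => by simp only [Fn_periodic α r 1 θ y]) h1 0
  have hφ : IntervalIntegrable (fun t => Real.cos (t - θ)) volume (-π) π :=
    Continuous.intervalIntegrable (by fun_prop) _ _
  have h3 : ∫ u in (-π)..π, Fn α r 1 θ u * Real.cos (u - θ) = 0 := by
    rw [intervalIntegral.integral_of_le (by linarith [Real.pi_pos])]
    apply integral_eq_zero_of_ae
    filter_upwards [h2] with t ht
    rw [add_zero] at ht
    simp [ht]
  have hs := (a_summable hα hr0 1)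
  have := intervalIntegral.hasSum_integral_of_dominated_convergence (μ := volume) (a := -π) (b := π)
    (F := fun (j : ℕ) u => Real.exp (-α * ((j + 1 : ℕ) : ℝ) ^ r) * (Real.cos (((j + 1 : ℕ):ℝ) * u - θ) * Real.cos (u - θ)))
    (f := fun u => Fn α r 1 θ u * Real.cos (u - θ))
    (fun j u => Real.exp (-α * ((j + 1 : ℕ) : ℝ) ^ r)) ?_ ?_ ?_ ?_ ?_
  · rw [h3] at this
    simp only [intervalIntegral.integral_const_mul] at this
    have e : ∀ j : ℕ, ∫ u in (-π)..π, Real.cos (((j + 1 : ℕ):ℝ) * u - θ) * Real.cos (u - θ) =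
        if j = 0 then π else 0 := by
      intro j
      have := ortho (j := j + 1) (by omega) 1 θ θ
      rw [show (fun u : ℝ => Real.cos (((j + 1 : ℕ):ℝ) * u - θ) * Real.cos (((1:ℕ):ℝ) * (θ - u))) =
        fun u => Real.cos (((j + 1 : ℕ):ℝ) * u - θ) * Real.cos (u - θ) by
          funext u; rw [← Real.cos_neg (u - θ)]; congr 2; push_cast; ring] at this
      rw [this]
      by_cases h : j = 0
      · simp [h]
      · simp [h]
    simp only [e] at this
    have h5 := (hasSum_zero_iff_of_nonneg (fun j => by change (0:ℝ) ≤ _; split_ifs <;> positivity)).1 this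
    have h6 := congrFun h5 0
    simp [Real.pi_ne_zero] at h6
  · intro j
    exact Continuous.aestronglyMeasurable (by fun_prop)
  · intro j
    refine Eventually.of_forall (fun u _ => ?_)
    rw [norm_mul, norm_mul, Real.norm_eq_abs, Real.norm_eq_abs, Real.norm_eq_abs, Real.abs_exp]
    refine mul_le_of_le_one_right (Real.exp_pos _).le ?_
    exact mul_le_one₀ (Real.abs_cos_le_one _) (abs_nonneg _) (Real.abs_cos_le_one _)
  · exact Eventually.of_forall (fun t _ => hs)
  · exact intervalIntegrable_const
  · refine Eventually.of_forall (fun u _ => ?_)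
    have := (Fn_hasSum hα hr0 1 θ u).mul_right (Real.cos (u - θ))
    simpa only [mul_assoc] using this

lemma gen_ae_ne {α r : ℝ} (hα : 0 < α) (hr0 : 0 < r) (hr1 : r < 1) (β x : ℝ) :
    ∀ᵐ t ∂mu, genPoissonKernel α r β (x - t) ≠ 0 := by
  obtain ⟨t, ht, hne⟩ := gen_exists hα hr0 (-β)
  have h1 := (gen_analytic hα hr0 hr1 (-β)).preimage_zero_mem_codiscreteWithin hne ht
    (isConnected_Ioo Real.two_pi_pos)
  have h2 : ∀ᵐ y ∂(volume.restrict (Set.Ioo 0 (2*π))), genPoissonKernel α r (-β) y ≠ 0 :=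
    ae_restrict_le_codiscreteWithin measurableSet_Ioo h1
  have h3 := ae_shift (P := fun y => genPoissonKernel α r (-β) y ≠ 0)
    (fun y => by simp only [gen_eq hα hr0, Fn_periodic α r 1 _ y]) h2 (-x)
  filter_upwards [h3] with t ht
  rw [gen_eq hα hr0] at ht ⊢
  rw [show x - t = -(t + -x) by ring, Fn_neg]
  rwa [show -(β * π / 2) = -β * π / 2 by ring]

lemma holder {p q : ℝ≥0∞} (hpq : 1 / p + 1 / q = 1) {g φ : ℝ → ℝ} {μ : Measure ℝ} (hg : MemLp g q μ)
    (hφ : AEStronglyMeasurable φ μ) (hφ1 : eLpNorm φ p μ ≤ 1) :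
    |∫ t, g t * φ t ∂μ| ≤ (eLpNorm g q μ).toReal := by
  have : ENNReal.HolderTriple q p 1 := ⟨by simpa [add_comm] using hpq⟩
  have h1 := eLpNorm_smul_le_mul_eLpNorm (p := q) (q := p) (r := 1) hφ hg.1
  have h2 : ‖∫ t, g t * φ t ∂μ‖ₑ ≤ eLpNorm g q μ := by
    refine (enorm_integral_le_lintegral_enorm _).trans ?_
    rw [eLpNorm_one_eq_lintegral_enorm] at h1
    refine h1.trans ?_
    calc _ ≤ eLpNorm g q μ * 1 := by gcongr
      _ = _ := mul_one _
  rw [← Real.norm_eq_abs, ← toReal_enorm]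
  exact ENNReal.toReal_mono hg.2.ne h2

lemma cont_memLp {E : Type*} [NormedAddCommGroup E] {g : ℝ → E} (hg : Continuous g) (q : ℝ≥0∞) : MemLp g q mu := by
  obtain ⟨C, hC⟩ := (isCompact_Icc (a := -π) (b := π)).exists_bound_of_continuousOn hg.continuousOn
  refine MemLp.of_bound hg.aestronglyMeasurable C ?_
  refine (ae_restrict_iff' measurableSet_Ioc).2 (Eventually.of_forall fun t ht => hC t ⟨ht.1.le, ht.2⟩)

lemma dev_le {α r : ℝ} (hα : 0 < α) (hr0 : 0 < r) (hr1 : r < 1) {β : ℝ} {p q : ℝ≥0∞} (hp : 1 ≤ p)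
    (hpq : 1 / p + 1 / q = 1) {f : ℝ → ℝ} (hf : f ∈ poissonClass α r β p) {n : ℕ} (hn : 1 ≤ n) (x : ℝ) :
    |f x - fourierSum (n - 1) f x| ≤
      (1 / π) * (eLpNorm (Fn α r n (-(β * π / 2))) q mu).toReal := by
  obtain ⟨hper, a₀, φ, hφp, hφ1, hφ0, hfx⟩ := hf
  have hpi := Real.pi_pos
  by_cases hm : AEStronglyMeasurable φ mu
  · have hm2 : AEStronglyMeasurable φ (volume.restrict (Set.Ioc 0 (2*π))) := by
      simpa using per_aesm hφp 0 tp_eq pi_eq' hm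
    have hn1 : eLpNorm φ p mu ≤ 1 := by
      have := per_eLpNorm hφp 0 pi_eq' tp_eq p hm2
      simp only [add_zero] at this
      rw [mu, this]; exact hφ1
    have hL : MemLp φ p mu := ⟨hm, hn1.trans_lt ENNReal.one_lt_top⟩
    have hint : IntervalIntegrable φ volume (-π) π := by
      rw [intervalIntegrable_iff_integrableOn_Ioc_of_le (by linarith)]
      exact hL.integrable hp
    simp only [gen_eq hα hr0] at hfx
    rw [dev_eq hα hr0 hint hfx hn x, abs_mul, abs_of_pos (by positivity : 0 < 1/π)]
    gcongr
    rw [intervalIntegral.integral_of_le (by linarith)]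
    have e : ∀ t, Fn α r n (β*π/2) (x - t) = Fn α r n (-(β*π/2)) (t + -x) := by
      intro t; rw [← Fn_neg]; congr 1; ring
    simp only [e]
    have hc := Fn_cont hα hr0 n (-(β*π/2))
    refine (holder hpq (cont_memLp (by fun_prop) q) hm hn1).trans (le_of_eq ?_)
    rw [per_eLpNorm (Fn_periodic α r n _) (-x) pi_eq' pi_eq' q hc.aestronglyMeasurable]
  · have hz : ∀ x, ∫ t in (-π)..π, genPoissonKernel α r β (x - t) * φ t = 0 := by
      intro x
      rw [intervalIntegral.integral_of_le (by linarith)]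
      apply integral_undef
      intro hi
      apply hm
      have hgc : Continuous (genPoissonKernel α r β) := by
        rw [funext (gen_eq hα hr0 β)]; exact Fn_cont hα hr0 _ _
      have h1 : AEStronglyMeasurable (fun t => (genPoissonKernel α r β (x - t))⁻¹ *
          (genPoissonKernel α r β (x - t) * φ t)) mu := by
        refine AEStronglyMeasurable.mul ?_ hi.1
        have : Measurable fun t => (genPoissonKernel α r β (x - t))⁻¹ :=
          (hgc.measurable.comp (by fun_prop)).inv
        exact this.aestronglyMeasurable
      refine h1.congr ?_
      filter_upwards [gen_ae_ne hα hr0 hr1 β x] with t ht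
      field_simp
    have h2 := dev_eq hα hr0 (φ := fun _ => 0) (f := f) (a₀ := a₀) (θ := β * π/2) (by simp)
      (fun x => by rw [hfx, hz]; simp) hn x
    rw [h2]
    simp
    positivity

/-- norm -/
noncomputable def NN {E : Type*} [NormedAddCommGroup E] (q : ℝ≥0∞) (g : ℝ → E) : ℝ := (eLpNorm g q mu).toReal

lemma NN_nonneg {E : Type*} [NormedAddCommGroup E] (q : ℝ≥0∞) (g : ℝ → E) : 0 ≤ NN q g := ENNReal.toReal_nonneg

lemma NN_mono {E F : Type*} [NormedAddCommGroup E] [NormedAddCommGroup F] {q : ℝ≥0∞} {g : ℝ → E} {h : ℝ → F}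
    (hh : Continuous h) (H : ∀ t, ‖g t‖ ≤ ‖h t‖) : NN q g ≤ NN q h :=
  ENNReal.toReal_mono (cont_memLp hh q).2.ne (eLpNorm_mono H)

lemma NN_dom {q : ℝ≥0∞} (hq : 1 ≤ q) {g g' : ℝ → ℝ} {P : ℝ → ℂ} (hg' : Continuous g') (hP : Continuous P)
    {ε : ℝ} (hε : 0 ≤ ε) (H : ∀ t, |g t| ≤ |g' t| + ε * ‖P t‖) : NN q g ≤ NN q g' + ε * NN q P := by
  have h1 : eLpNorm g q mu ≤ eLpNorm ((fun t => |g' t|) + (ε • fun t => ‖P t‖)) q mu :=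
    eLpNorm_mono_real (fun t => by simpa using H t)
  have h2 := eLpNorm_add_le (μ := mu) (f := fun t => |g' t|) (g := ε • fun t => ‖P t‖)
    (by fun_prop) (Continuous.aestronglyMeasurable (by fun_prop)) hq
  rw [eLpNorm_const_smul, eLpNorm_norm] at h2
  have e : eLpNorm (fun t => |g' t|) q mu = eLpNorm g' q mu := eLpNorm_norm g'
  rw [e] at h2
  have f1 := (cont_memLp hg' q).2.ne
  have f2 := (cont_memLp hP q).2.ne
  have h3 := ENNReal.toReal_mono (by finiteness) (h1.trans h2)
  rw [ENNReal.toReal_add f1 (by finiteness), ENNReal.toReal_mul] at h3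
  simpa [NN, abs_of_nonneg hε] using h3

lemma Pn_pos_norm {α r : ℝ} (hα : 0 < α) (hr0 : 0 < r) (n : ℕ) {q : ℝ≥0∞} (hq : 1 ≤ q) : 0 < NN q (Pn α r n) := by
  have h := cont_memLp (Pn_cont hα hr0 n) q
  refine ENNReal.toReal_pos ?_ h.2.ne
  intro h0
  rw [eLpNorm_eq_zero_iff h.1 (by positivity)] at h0
  have : mu = 0 := by
    have h2 : ∀ᵐ t ∂mu, False := by
      filter_upwards [h0] with t ht
      exact Pn_ne hα hr0 n t ht
    exact ae_eq_bot.1 (eventually_false_iff_eq_bot.1 h2)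
  have hh := congrArg (fun m : Measure ℝ => m Set.univ) this
  simp at hh
  linarith [Real.pi_pos]

lemma Fn_shift_norm {α r : ℝ} (hα : 0 < α) (hr0 : 0 < r) {n : ℕ} (hn : 1 ≤ n) {q : ℝ≥0∞} (hq : 1 ≤ q) (θ : ℝ)
    {s ε : ℝ} (hs : 0 ≤ s) (hε : Real.exp (Mn α r n * (s / n)) - 1 ≤ ε) :
    |NN q (Fn α r n (θ - s)) - NN q (Fn α r n θ)| ≤ ε * NN q (Pn α r n) := by
  have hM := Mn_pos hα hr0 n
  have hε0 : 0 ≤ ε := by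
    refine le_trans ?_ hε
    have : (1:ℝ) ≤ Real.exp (Mn α r n * (s / n)) := Real.one_le_exp (by positivity)
    linarith
  have e : NN q (fun t => Fn α r n θ (t + s/n)) = NN q (Fn α r n θ) := by
    rw [NN, NN, mu, per_eLpNorm (Fn_periodic α r n θ) (s/n) pi_eq' pi_eq' q
      (Fn_cont hα hr0 n θ).aestronglyMeasurable]
  have hc := Fn_cont hα hr0 n θ
  have hc2 := Fn_cont hα hr0 n (θ - s)
  have hP := Pn_cont hα hr0 n
  have key : ∀ t, |Fn α r n θ (t + s/n) - Fn α r n (θ-s) t| ≤ ε * ‖Pn α r n t‖ := fun t =>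
    (Fn_shift hα hr0 hn θ t hs).trans (by gcongr)
  have h1 := NN_dom hq (g := Fn α r n (θ - s)) (g' := fun t => Fn α r n θ (t + s/n)) (by fun_prop) hP hε0
    (fun t => by
      have h := key t
      have := abs_sub_abs_le_abs_sub (Fn α r n (θ-s) t) (Fn α r n θ (t + s/n))
      rw [abs_sub_comm] at this
      linarith)
  have h2 := NN_dom hq (g' := Fn α r n (θ - s)) (g := fun t => Fn α r n θ (t + s/n)) hc2 hP hε0
    (fun t => by
      have h := key t
      have := abs_sub_abs_le_abs_sub (Fn α r n θ (t + s/n)) (Fn α r n (θ-s) t)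
      linarith)
  rw [e] at h1 h2
  rw [abs_le]; constructor <;> linarith

lemma Fn_polar (α r : ℝ) (n : ℕ) (θ s t : ℝ) :
    Fn α r n (θ - s) t = ‖Pn α r n t‖ * Real.cos (s + (n * t - θ + Complex.arg (Pn α r n t))) := by
  rw [Fn]
  conv_lhs => rw [← Complex.norm_mul_exp_arg_mul_I (Pn α r n t)]
  rw [mul_left_comm, ← Complex.exp_add, Complex.re_ofReal_mul]
  congr 1
  rw [show Complex.I * ((n * t - (θ - s) : ℝ) : ℂ) + (Complex.arg (Pn α r n t) : ℂ) * Complex.I =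
    ((s + (n * t - θ + Complex.arg (Pn α r n t)) : ℝ) : ℂ) * Complex.I by push_cast; ring, Complex.exp_ofReal_mul_I_re]

lemma avg_id {α r : ℝ} (hα : 0 < α) (hr0 : 0 < r) (n : ℕ) (θ q : ℝ) (hq : 0 ≤ q) :
    ∫⁻ s in Set.Ioc 0 (2*π), ∫⁻ t, ‖Fn α r n (θ - s) t‖ₑ ^ q ∂mu =
      (∫⁻ t, ‖Pn α r n t‖ₑ ^ q ∂mu) * ∫⁻ s in Set.Ioc 0 (2*π), ‖Real.cos s‖ₑ ^ q := by
  have hP := Pn_cont hα hr0 n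
  rw [lintegral_lintegral_swap]
  · rw [← lintegral_mul_const' ]
    · congr 1; ext t
      have : ∀ s, ‖Fn α r n (θ - s) t‖ₑ ^ q = ‖Pn α r n t‖ₑ ^ q *
          ‖Real.cos (s + (n * t - θ + Complex.arg (Pn α r n t)))‖ₑ ^ q := by
        intro s
        rw [Fn_polar, enorm_mul, ENNReal.mul_rpow_of_nonneg _ _ hq]
        simp
      simp only [this]
      rw [lintegral_const_mul' _ _ (by finiteness)]
      congr 1
      set c := (n * t - θ + Complex.arg (Pn α r n t))
      have h1 : Function.Periodic (fun s => ‖Real.cos s‖ₑ ^ q) (2*π) := fun s => by simp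
      have h2 := (tau_mp 0 (2*π) 0 (2*π) c tp_eq tp_eq).lintegral_comp (f := fun s => ‖Real.cos s‖ₑ ^ q) (by fun_prop)
      rw [← h2]
      congr 1; ext s
      exact (periodic_tau h1 0 c s).symm
    · refine ne_of_lt (lt_of_le_of_lt (lintegral_mono (g := fun _ => 1) fun s => ?_) (by simp; finiteness))
      refine ENNReal.rpow_le_one ?_ hq
      rw [← ofReal_norm]; simpa using Real.abs_cos_le_one s
  · have : Continuous (fun z : ℝ × ℝ => Fn α r n (θ - z.1) z.2) := by
      unfold Fn; fun_prop
    exact (this.enorm.measurable.pow_const q).aemeasurable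

lemma eLp_pow {E : Type*} [NormedAddCommGroup E] {q : ℝ≥0∞} (hq : 1 ≤ q) (hqt : q ≠ ∞) (g : ℝ → E) (μ : Measure ℝ) :
    ∫⁻ t, ‖g t‖ₑ ^ q.toReal ∂μ = (eLpNorm g q μ) ^ q.toReal := by
  have hq0 : q ≠ 0 := by positivity
  have hpos := ENNReal.toReal_pos hq0 hqt
  rw [eLpNorm_eq_lintegral_rpow_enorm_toReal hq0 hqt, ← ENNReal.rpow_mul, one_div, inv_mul_cancel₀ hpos.ne', ENNReal.rpow_one]

lemma mass_eq {x : ℝ} (hx : 0 < x) : (ENNReal.ofReal (2*π)) = ((ENNReal.ofReal (2*π)) ^ (1/x)) ^ x := by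
  rw [← ENNReal.rpow_mul, one_div, inv_mul_cancel₀ hx.ne', ENNReal.rpow_one]

lemma cos_fin (q : ℝ≥0∞) : eLpNorm (fun t : ℝ => Real.cos t) q (volume.restrict (Set.Ioc (0 : ℝ) (2 * π))) ≠ ∞ :=
  (MemLp.of_bound (by fun_prop) 1 (Eventually.of_forall fun t => by simpa using Real.abs_cos_le_one t)).2.ne

lemma avgU_fin {α r : ℝ} (hα : 0 < α) (hr0 : 0 < r) (n : ℕ) (θ : ℝ) {q : ℝ≥0∞} (hq : 1 ≤ q) (hqt : q ≠ ∞)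
    {U : ℝ} (hU : ∀ s ∈ Set.Ioc 0 (2*π), NN q (Fn α r n (θ - s)) ≤ U) :
    NN q (Pn α r n) * cosNorm q ≤ U * (2*π) ^ (1/q.toReal) := by
  have hq0 : q ≠ 0 := by positivity
  have hpos := ENNReal.toReal_pos hq0 hqt
  have hU0 : 0 ≤ U := (NN_nonneg _ _).trans (hU (2*π) ⟨Real.two_pi_pos, le_rfl⟩)
  have h1 := avg_id hα hr0 n θ q.toReal hpos.le
  have h2 : ∫⁻ s in Set.Ioc 0 (2*π), ∫⁻ t, ‖Fn α r n (θ - s) t‖ₑ ^ q.toReal ∂mu ≤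
      ∫⁻ s in Set.Ioc 0 (2*π), (ENNReal.ofReal U) ^ q.toReal := by
    refine setLIntegral_mono (by fun_prop) fun s hs => ?_
    rw [eLp_pow hq hqt]
    gcongr
    rw [ENNReal.le_ofReal_iff_toReal_le (cont_memLp (Fn_cont hα hr0 n _) q).2.ne hU0]
    exact hU s hs
  rw [h1, eLp_pow hq hqt, eLp_pow hq hqt, setLIntegral_const, Real.volume_Ioc, sub_zero, mass_eq hpos,
    ← ENNReal.mul_rpow_of_nonneg _ _ hpos.le, ← ENNReal.mul_rpow_of_nonneg _ _ hpos.le,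
    ENNReal.rpow_le_rpow_iff hpos] at h2
  have h3 := ENNReal.toReal_mono (by finiteness) h2
  rw [ENNReal.toReal_mul, ENNReal.toReal_mul, ← ENNReal.toReal_rpow, ENNReal.toReal_ofReal hU0,
    ENNReal.toReal_ofReal Real.two_pi_pos.le] at h3
  exact h3

lemma avgV_fin {α r : ℝ} (hα : 0 < α) (hr0 : 0 < r) (n : ℕ) (θ : ℝ) {q : ℝ≥0∞} (hq : 1 ≤ q) (hqt : q ≠ ∞)
    {U : ℝ} (hU0 : 0 ≤ U) (hU : ∀ s ∈ Set.Ioc 0 (2*π), U ≤ NN q (Fn α r n (θ - s))) :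
    U * (2*π) ^ (1/q.toReal) ≤ NN q (Pn α r n) * cosNorm q := by
  have hq0 : q ≠ 0 := by positivity
  have hpos := ENNReal.toReal_pos hq0 hqt
  have h1 := avg_id hα hr0 n θ q.toReal hpos.le
  have h2 : ∫⁻ s in Set.Ioc 0 (2*π), (ENNReal.ofReal U) ^ q.toReal ≤
      ∫⁻ s in Set.Ioc 0 (2*π), ∫⁻ t, ‖Fn α r n (θ - s) t‖ₑ ^ q.toReal ∂mu := by
    refine setLIntegral_mono' measurableSet_Ioc fun s hs => ?_
    rw [eLp_pow hq hqt]
    gcongr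
    exact ENNReal.ofReal_le_of_le_toReal (hU s hs)
  rw [h1, eLp_pow hq hqt, eLp_pow hq hqt, setLIntegral_const, Real.volume_Ioc, sub_zero, mass_eq hpos,
    ← ENNReal.mul_rpow_of_nonneg _ _ hpos.le, ← ENNReal.mul_rpow_of_nonneg _ _ hpos.le,
    ENNReal.rpow_le_rpow_iff hpos] at h2
  have f1 := (cont_memLp (Pn_cont hα hr0 n) q).2.ne
  have f2 := cos_fin q
  have h3 := ENNReal.toReal_mono (by finiteness) h2
  rw [ENNReal.toReal_mul, ENNReal.toReal_mul, ← ENNReal.toReal_rpow, ENNReal.toReal_ofReal hU0,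
    ENNReal.toReal_ofReal Real.two_pi_pos.le] at h3
  exact h3

lemma sup_ge {E : Type*} [NormedAddCommGroup E] {g : ℝ → E} (hg : Continuous g) {a b : ℝ} (hab : a < b) {K : ℝ}
    (h : ∀ᵐ t ∂(volume.restrict (Set.Ioc a b)), ‖g t‖ ≤ K) : ∀ t ∈ Set.Icc a b, ‖g t‖ ≤ K := by
  rw [Measure.restrict_congr_set Ioo_ae_eq_Ioc.symm] at h
  have h1 := Measure.eqOn_open_of_ae_eq (μ := volume) (U := Set.Ioo a b) (f := fun t => max (‖g t‖) K) (g := fun _ => K)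
    (by filter_upwards [h] with t ht; simpa using ht) isOpen_Ioo (by fun_prop) (by fun_prop)
  have h2 := h1.closure (by fun_prop) (by fun_prop)
  rw [closure_Ioo hab.ne] at h2
  intro t ht
  simpa using h2 ht

lemma top_ge {E : Type*} [NormedAddCommGroup E] {g : ℝ → E} (hg : Continuous g) :
    ∀ t ∈ Set.Icc (-π) π, ‖g t‖ ≤ NN ∞ g := by
  have hpi := Real.pi_pos
  refine sup_ge hg (by linarith) ?_
  have := enorm_ae_le_eLpNormEssSup g mu
  filter_upwards [this] with t ht
  rw [← toReal_enorm]
  refine ENNReal.toReal_mono (cont_memLp hg ∞).2.ne ?_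
  rwa [eLpNorm_exponent_top]

lemma top_le {E : Type*} [NormedAddCommGroup E] {g : ℝ → E} {K : ℝ} (hK : 0 ≤ K)
    (h : ∀ t ∈ Set.Icc (-π) π, ‖g t‖ ≤ K) : NN ∞ g ≤ K := by
  refine ENNReal.toReal_le_of_le_ofReal hK ?_
  rw [eLpNorm_exponent_top]
  refine eLpNormEssSup_le_of_ae_bound ?_
  exact (ae_restrict_iff' measurableSet_Ioc).2 (Eventually.of_forall fun t ht => h t ⟨ht.1.le, ht.2⟩)

lemma cosNorm_top : cosNorm ∞ = 1 := by
  have hb := Real.two_pi_pos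
  apply le_antisymm
  · refine ENNReal.toReal_le_of_le_ofReal zero_le_one ?_
    rw [eLpNorm_exponent_top]
    exact eLpNormEssSup_le_of_ae_bound (Eventually.of_forall fun t => by simpa using Real.abs_cos_le_one t)
  · have := sup_ge (g := fun t : ℝ => Real.cos t) (K := cosNorm ∞) (by fun_prop) hb (by
      have := enorm_ae_le_eLpNormEssSup (fun t : ℝ => Real.cos t) (volume.restrict (Set.Ioc (0 : ℝ) (2 * π)))
      filter_upwards [this] with t ht
      rw [← toReal_enorm]
      refine ENNReal.toReal_mono (cos_fin ∞) ?_
      rwa [eLpNorm_exponent_top]) 0 ⟨le_rfl, hb.le⟩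
    simpa using this

lemma avgU {α r : ℝ} (hα : 0 < α) (hr0 : 0 < r) (n : ℕ) (θ : ℝ) {q : ℝ≥0∞} (hq : 1 ≤ q)
    {U : ℝ} (hU : ∀ s ∈ Set.Ioc 0 (2*π), NN q (Fn α r n (θ - s)) ≤ U) :
    NN q (Pn α r n) * cosNorm q ≤ U * (2*π) ^ (1/q.toReal) := by
  by_cases hqt : q = ∞
  · subst hqt
    have hU0 : 0 ≤ U := (NN_nonneg _ _).trans (hU (2*π) ⟨Real.two_pi_pos, le_rfl⟩)
    simp only [cosNorm_top, mul_one, ENNReal.toReal_top, div_zero, Real.rpow_zero]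
    refine top_le hU0 fun t ht => ?_
    set c := (n * t - θ + Complex.arg (Pn α r n t)) with hc
    have h1 := toIocMod_mem_Ioc Real.two_pi_pos 0 (-c)
    rw [zero_add] at h1
    have h2 := top_ge (Fn_cont hα hr0 n (θ - toIocMod Real.two_pi_pos 0 (-c))) t ht
    have h3 : Fn α r n (θ - toIocMod Real.two_pi_pos 0 (-c)) t = ‖Pn α r n t‖ := by
      rw [Fn_polar, ← hc]
      have : Real.cos (toIocMod Real.two_pi_pos 0 (-c) + c) = 1 := by
        have hp : Function.Periodic (fun x => Real.cos (x + c)) (2*π) := fun x => by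
          dsimp only; rw [add_right_comm, Real.cos_add_two_pi]
        rw [toIocMod, hp.sub_zsmul_eq]; simp
      rw [this, mul_one]
    rw [h3, Real.norm_eq_abs, abs_norm] at h2
    exact h2.trans (hU _ h1)
  · exact avgU_fin hα hr0 n θ hq hqt hU

lemma Fn_le_Pn {α r : ℝ} (hα : 0 < α) (hr0 : 0 < r) (n : ℕ) (θ : ℝ) (q : ℝ≥0∞) :
    NN q (Fn α r n θ) ≤ NN q (Pn α r n) := NN_mono (Pn_cont hα hr0 n) (Fn_abs_le α r n θ)

lemma avgV {α r : ℝ} (hα : 0 < α) (hr0 : 0 < r) (n : ℕ) (θ : ℝ) {q : ℝ≥0∞} (hq : 1 ≤ q)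
    {U : ℝ} (hU0 : 0 ≤ U) (hU : ∀ s ∈ Set.Ioc 0 (2*π), U ≤ NN q (Fn α r n (θ - s))) :
    U * (2*π) ^ (1/q.toReal) ≤ NN q (Pn α r n) * cosNorm q := by
  by_cases hqt : q = ∞
  · subst hqt
    simp only [cosNorm_top, mul_one, ENNReal.toReal_top, div_zero, Real.rpow_zero]
    exact (hU (2*π) ⟨Real.two_pi_pos, le_rfl⟩).trans (Fn_le_Pn hα hr0 n _ _)
  · exact avgV_fin hα hr0 n θ hq hqt hU0 hU

/-- the main constant -/
noncomputable def CC (α r : ℝ) (n : ℕ) (q : ℝ≥0∞) : ℝ := NN q (Pn α r n) * cosNorm q / (2*π) ^ (1/q.toReal)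

lemma CC_le {α r : ℝ} (hα : 0 < α) (hr0 : 0 < r) (n : ℕ) {q : ℝ≥0∞} (hq : 1 ≤ q) : CC α r n q ≤ NN q (Pn α r n) := by
  have hb : 0 < (2*π) ^ (1/q.toReal) := Real.rpow_pos_of_pos Real.two_pi_pos _
  rw [CC, div_le_iff₀ hb]
  exact avgU hα hr0 n 0 hq fun s _ => Fn_le_Pn hα hr0 n _ _

lemma CC_nonneg (α r : ℝ) (n : ℕ) (q : ℝ≥0∞) : 0 ≤ CC α r n q := by
  have := NN_nonneg q (Pn α r n)
  have : 0 ≤ cosNorm q := ENNReal.toReal_nonneg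
  unfold CC
  positivity

lemma A_sub_C {α r : ℝ} (hα : 0 < α) (hr0 : 0 < r) {n : ℕ} (hn : 1 ≤ n) (θ : ℝ) {q : ℝ≥0∞} (hq : 1 ≤ q)
    {ε : ℝ} (hε : Real.exp (Mn α r n * (2 * π / n)) - 1 ≤ ε) :
    |NN q (Fn α r n θ) - CC α r n q| ≤ ε * NN q (Pn α r n) := by
  have hb : 0 < (2*π) ^ (1/q.toReal) := Real.rpow_pos_of_pos Real.two_pi_pos _
  have hM := Mn_pos hα hr0 n
  have hn0 : (0:ℝ) < n := by exact_mod_cast hn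
  have key : ∀ s ∈ Set.Ioc 0 (2*π), |NN q (Fn α r n (θ - s)) - NN q (Fn α r n θ)| ≤ ε * NN q (Pn α r n) := by
    intro s hs
    refine Fn_shift_norm hα hr0 hn hq θ hs.1.le (le_trans ?_ hε)
    gcongr
    exact hs.2
  have h1 : CC α r n q ≤ NN q (Fn α r n θ) + ε * NN q (Pn α r n) := by
    rw [CC, div_le_iff₀ hb]
    exact avgU hα hr0 n θ hq fun s hs => by linarith [(abs_le.1 (key s hs)).2]
  have h2 : NN q (Fn α r n θ) - ε * NN q (Pn α r n) ≤ CC α r n q := by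
    by_cases h0 : 0 ≤ NN q (Fn α r n θ) - ε * NN q (Pn α r n)
    · rw [CC, le_div_iff₀ hb]
      exact avgV hα hr0 n θ hq h0 fun s hs => by linarith [(abs_le.1 (key s hs)).1]
    · linarith [CC_nonneg α r n q]
  rw [abs_le]; constructor <;> linarith

noncomputable def sg (y : ℝ) : ℝ := if 0 ≤ y then 1 else -1

lemma sg_meas : Measurable sg := Measurable.ite measurableSet_Ici measurable_const measurable_const

lemma sg_abs (y : ℝ) : |sg y| = 1 := by unfold sg; split_ifs <;> simp

lemma mul_sg (y : ℝ) : y * sg y = |y| := by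
  unfold sg; split_ifs with h
  · rw [abs_of_nonneg h, mul_one]
  · rw [abs_of_neg (not_le.1 h)]; ring

lemma dual_top {g : ℝ → ℝ} (hg : Continuous g) {η : ℝ} (hη : 0 < η) (hA : η < NN ∞ g) :
    ∃ Ψ : ℝ → ℝ, Measurable Ψ ∧ eLpNorm (fun t => Ψ (g t)) 1 mu ≤ 1 ∧
      NN ∞ g - η ≤ ∫ t, g t * Ψ (g t) ∂mu := by
  set A := NN ∞ g with hAdef
  set S : Set ℝ := {t | A - η < |g t|} with hS
  have hSm : MeasurableSet S := (isOpen_lt continuous_const hg.abs).measurableSet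
  have hm : 0 < mu.real S := by
    rw [Measure.real, ENNReal.toReal_pos_iff]
    refine ⟨?_, measure_lt_top _ _⟩
    rw [pos_iff_ne_zero]
    intro h0
    have h1 : ∀ᵐ t ∂mu, ‖g t‖ ≤ A - η := by
      rw [ae_iff]; simpa [hS, not_le] using h0
    have h2 := top_le (g := g) (K := A - η) (by linarith) (sup_ge hg (by linarith [Real.pi_pos]) h1)
    linarith
  set m := mu.real S with hmdef
  refine ⟨fun y => if A - η < |y| then sg y / m else 0, ?_, ?_, ?_⟩
  · exact Measurable.ite (isOpen_lt continuous_const continuous_abs).measurableSet (sg_meas.div_const m) measurable_const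
  · rw [eLpNorm_one_eq_lintegral_enorm]
    have : ∀ t, ‖(if A - η < |g t| then sg (g t) / m else 0)‖ₑ = S.indicator (fun _ => ENNReal.ofReal (1/m)) t := by
      intro t
      by_cases h : t ∈ S
      · rw [Set.indicator_of_mem h, if_pos (show A - η < |g t| from h), ← ofReal_norm, Real.norm_eq_abs, abs_div, sg_abs, abs_of_pos hm]
      · rw [Set.indicator_of_notMem h, if_neg (show ¬ (A - η < |g t|) from h)]; simp
    simp only [this]
    rw [lintegral_indicator hSm, setLIntegral_const, ← ofReal_measureReal, ← ENNReal.ofReal_mul (by positivity)]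
    rw [one_div, inv_mul_cancel₀ hm.ne', ENNReal.ofReal_one]
  · have hb : ∫ t, S.indicator (fun _ => (A - η)/m) t ∂mu = A - η := by
      rw [integral_indicator hSm, setIntegral_const, smul_eq_mul]
      rw [← hmdef]; field_simp
    refine hb.symm.le.trans ?_
    apply integral_mono
    · exact (integrable_const _).indicator hSm
    · have hi := (memLp_one_iff_integrable.1 (cont_memLp hg.abs 1)).div_const m |>.indicator hSm
      refine hi.congr (Eventually.of_forall fun t => ?_)
      by_cases h : t ∈ S
      · simp only [Set.indicator_of_mem h]; rw [if_pos (show A - η < |g t| from h), ← mul_div_assoc, mul_sg]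
      · simp only [Set.indicator_of_notMem h]; rw [if_neg (show ¬ (A - η < |g t|) from h)]; simp
    · intro t
      by_cases h : t ∈ S
      · simp only [Set.indicator_of_mem h]; rw [if_pos (show A - η < |g t| from h), ← mul_div_assoc, mul_sg]
        have : A - η < |g t| := h
        gcongr
      · simp only [Set.indicator_of_notMem h]; rw [if_neg (show ¬ (A - η < |g t|) from h)]; simp

lemma dual_one {g : ℝ → ℝ} (hg : Continuous g) :
    ∃ Ψ : ℝ → ℝ, Measurable Ψ ∧ eLpNorm (fun t => Ψ (g t)) ∞ mu ≤ 1 ∧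
      NN 1 g ≤ ∫ t, g t * Ψ (g t) ∂mu := by
  refine ⟨sg, sg_meas, ?_, ?_⟩
  · rw [eLpNorm_exponent_top, ← ENNReal.ofReal_one]
    exact eLpNormEssSup_le_of_ae_bound (Eventually.of_forall fun t => (sg_abs _).le)
  · simp only [mul_sg]
    have hi := memLp_one_iff_integrable.1 (cont_memLp hg 1)
    rw [NN, eLpNorm_one_eq_lintegral_enorm, ← integral_norm_eq_lintegral_enorm hi.1]
    rfl

lemma dual_mid {p q : ℝ≥0∞} (hpt : p ≠ ∞) (hqt : q ≠ ∞) (hp1 : 1 < p.toReal) (hq1 : 1 < q.toReal)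
    (hpq : (q.toReal - 1) * p.toReal = q.toReal) {g : ℝ → ℝ} (hg : Continuous g) (hA : 0 < NN q g) :
    ∃ Ψ : ℝ → ℝ, Measurable Ψ ∧ eLpNorm (fun t => Ψ (g t)) p mu ≤ 1 ∧
      NN q g ≤ ∫ t, g t * Ψ (g t) ∂mu := by
  have hq0 : q ≠ 0 := by rintro rfl; simp at hq1; linarith
  have hp0 : p ≠ 0 := by rintro rfl; simp at hp1; linarith
  have hI := (cont_memLp hg q).eLpNorm_eq_integral_rpow_norm hq0 hqt
  have hi : Integrable (fun t => |g t| ^ q.toReal) mu := by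
    refine memLp_one_iff_integrable.1 (cont_memLp ?_ 1)
    exact hg.abs.rpow_const (fun _ => Or.inr (by linarith))
  have hI2 : ∫ t, |g t| ^ q.toReal ∂mu = (NN q g) ^ q.toReal := by
    have h0 : 0 ≤ ∫ t, |g t| ^ q.toReal ∂mu := integral_nonneg fun t => by positivity
    rw [NN, hI, ENNReal.toReal_ofReal (by positivity), ← Real.rpow_mul (by positivity), inv_mul_cancel₀ (by linarith),
      Real.rpow_one]
    rfl
  set A := NN q g with hAdef
  refine ⟨fun y => sg y * |y| ^ (q.toReal - 1) / A ^ (q.toReal - 1), ?_, ?_, ?_⟩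
  · exact (sg_meas.mul (by fun_prop)).div_const _
  · rw [eLpNorm_eq_lintegral_rpow_enorm_toReal hp0 hpt]
    have e : ∀ t, ‖sg (g t) * |g t| ^ (q.toReal - 1) / A ^ (q.toReal - 1)‖ₑ ^ p.toReal =
        ENNReal.ofReal (|g t| ^ q.toReal / A ^ q.toReal) := by
      intro t
      rw [← ofReal_norm, ENNReal.ofReal_rpow_of_nonneg (norm_nonneg _) (by linarith)]
      congr 1
      rw [Real.norm_eq_abs, abs_div, abs_mul, sg_abs, one_mul, abs_of_nonneg (by positivity : 0 ≤ |g t| ^ (q.toReal - 1)),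
        abs_of_nonneg (by positivity : 0 ≤ A ^ (q.toReal - 1)), Real.div_rpow (by positivity) (by positivity),
        ← Real.rpow_mul (by positivity), ← Real.rpow_mul (by positivity), hpq]
    simp only [e]
    rw [← ofReal_integral_eq_lintegral_ofReal (hi.div_const _) (Eventually.of_forall fun t => by positivity),
      integral_div, hI2, div_self (by positivity)]
    simp
  · have e : ∀ t, g t * (sg (g t) * |g t| ^ (q.toReal - 1) / A ^ (q.toReal - 1)) =
        |g t| ^ q.toReal / A ^ (q.toReal - 1) := by
      intro t
      rw [← mul_div_assoc, ← mul_assoc, mul_sg]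
      congr 1
      rcases eq_or_lt_of_le (abs_nonneg (g t)) with h | h
      · rw [← h, zero_mul, Real.zero_rpow (by linarith)]
      · rw [Real.rpow_sub_one h.ne']; field_simp
    simp only [e]
    rw [integral_div, hI2, Real.rpow_sub_one hA.ne']
    apply le_of_eq
    have : 0 < A ^ q.toReal := by positivity
    field_simp

lemma dual {p q : ℝ≥0∞} (hpq : 1 / p + 1 / q = 1) {g : ℝ → ℝ} (hg : Continuous g) {η : ℝ} (hη : 0 < η) :
    ∃ Ψ : ℝ → ℝ, Measurable Ψ ∧ eLpNorm (fun t => Ψ (g t)) p mu ≤ 1 ∧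
      NN q g - η ≤ ∫ t, g t * Ψ (g t) ∂mu := by
  rcases le_or_gt (NN q g) η with h | h
  · exact ⟨fun _ => 0, measurable_const, by simp, by simpa using h⟩
  have hA : 0 < NN q g := hη.trans h
  have hc : p.HolderConjugate q := ⟨by simpa using hpq⟩
  by_cases hqt : q = ∞
  · subst hqt
    have : p = 1 := by simpa using hpq
    subst this
    exact dual_top hg hη h
  by_cases hpt : p = ∞
  · subst hpt
    have : q = 1 := by simpa using hpq
    subst this
    obtain ⟨Ψ, h1, h2, h3⟩ := dual_one hg
    exact ⟨Ψ, h1, h2, by linarith⟩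
  have hp0 : p ≠ 0 := by rintro rfl; simp at hpq
  have hq0 : q ≠ 0 := by rintro rfl; simp at hpq
  have hpp := ENNReal.toReal_pos hp0 hpt
  have hqp := ENNReal.toReal_pos hq0 hqt
  have hr : 1 / p.toReal + 1 / q.toReal = 1 := by
    have := congrArg ENNReal.toReal hpq
    rw [ENNReal.toReal_add (by simp [hp0]) (by simp [hq0])] at this
    simpa using this
  have e : q.toReal + p.toReal = p.toReal * q.toReal := by field_simp at hr; linarith
  obtain ⟨Ψ, h1, h2, h3⟩ := dual_mid (p := p) (q := q) hpt hqt (by nlinarith) (by nlinarith) (by nlinarith) hg hA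
  exact ⟨Ψ, h1, h2, by linarith⟩

lemma EnC_inner {α r : ℝ} (hα : 0 < α) (hr0 : 0 < r) (hr1 : r < 1) {β : ℝ} {p q : ℝ≥0∞} (hp : 1 ≤ p)
    (hpq : 1 / p + 1 / q = 1) {n : ℕ} (hn : 1 ≤ n) (f : ℝ → ℝ) :
    (⨆ (_ : f ∈ poissonClass α r β p), ⨆ x : ℝ, |f x - fourierSum (n - 1) f x|) ≤
      (1 / π) * NN q (Fn α r n (-(β * π / 2))) := by
  have h0 := NN_nonneg q (Fn α r n (-(β * π / 2)))
  have hpi := Real.pi_pos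
  have hK : 0 ≤ (1 / π) * NN q (Fn α r n (-(β * π / 2))) := by positivity
  exact Real.iSup_le (fun hf => Real.iSup_le (fun x => dev_le hα hr0 hr1 hp hpq hf hn x) hK) hK

lemma EnC_le {α r : ℝ} (hα : 0 < α) (hr0 : 0 < r) (hr1 : r < 1) {β : ℝ} {p q : ℝ≥0∞} (hp : 1 ≤ p)
    (hpq : 1 / p + 1 / q = 1) {n : ℕ} (hn : 1 ≤ n) :
    EnC α r β p n ≤ (1 / π) * NN q (Fn α r n (-(β * π / 2))) := by
  have h0 := NN_nonneg q (Fn α r n (-(β * π / 2)))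
  have hpi := Real.pi_pos
  have hK : 0 ≤ (1 / π) * NN q (Fn α r n (-(β * π / 2))) := by positivity
  exact Real.iSup_le (fun f => EnC_inner hα hr0 hr1 hp hpq hn f) hK

lemma le_EnC {α r : ℝ} (hα : 0 < α) (hr0 : 0 < r) (hr1 : r < 1) {β : ℝ} {p q : ℝ≥0∞} (hp : 1 ≤ p)
    (hpq : 1 / p + 1 / q = 1) {n : ℕ} (hn : 1 ≤ n) {f : ℝ → ℝ} (hf : f ∈ poissonClass α r β p) (x : ℝ) :
    |f x - fourierSum (n - 1) f x| ≤ EnC α r β p n := by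
  unfold EnC
  refine le_ciSup_of_le ⟨(1 / π) * NN q (Fn α r n (-(β * π / 2))), ?_⟩ f ?_
  · rintro _ ⟨f, rfl⟩
    exact EnC_inner hα hr0 hr1 hp hpq hn f
  · rw [ciSup_pos hf]
    refine le_ciSup (f := fun x => |f x - fourierSum (n - 1) f x|) ⟨(1 / π) * NN q (Fn α r n (-(β * π / 2))), ?_⟩ x
    rintro _ ⟨x, rfl⟩
    exact dev_le hα hr0 hr1 hp hpq hf hn x

lemma EnC_nonneg (α r β : ℝ) (p : ℝ≥0∞) (n : ℕ) : 0 ≤ EnC α r β p n :=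
  Real.iSup_nonneg fun _ => Real.iSup_nonneg fun _ => Real.iSup_nonneg fun _ => abs_nonneg _

lemma lower {α r : ℝ} (hα : 0 < α) (hr0 : 0 < r) (hr1 : r < 1) {β : ℝ} {p q : ℝ≥0∞} (hp : 1 ≤ p) (hq : 1 ≤ q)
    (hpq : 1 / p + 1 / q = 1) {n : ℕ} (hn : 1 ≤ n) {η : ℝ} (hη : 0 < η) :
    (1 / π) * (NN q (Fn α r n (-(β * π / 2))) - η -
      (1/2) * ((Real.exp (Mn α r n * (π / n)) - 1) * NN q (Pn α r n))) ≤ EnC α r β p n := by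
  have hpi := Real.pi_pos
  have hn0 : (0:ℝ) < n := by exact_mod_cast hn
  have hM := Mn_pos hα hr0 n
  set θ := -(β * π / 2) with hθ
  set g := Fn α r n θ with hgdef
  have hg : Continuous g := Fn_cont hα hr0 n θ
  have hgp : Function.Periodic g (2*π) := Fn_periodic α r n θ
  obtain ⟨Ψ, hΨ, hΨ1, hΨ2⟩ := dual hpq hg hη
  set ψ : ℝ → ℝ := fun t => Ψ (g t) with hψ
  have hψp : Function.Periodic ψ (2*π) := fun t => by simp only [hψ, hgp t]
  have hψm : Measurable ψ := hΨ.comp hg.measurable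
  set h : ℝ := π / n with hh
  have hψL : MemLp ψ p mu := ⟨hψm.aestronglyMeasurable, hΨ1.trans_lt ENNReal.one_lt_top⟩
  have hψi : Integrable ψ mu := hψL.integrable hp
  -- shifted function
  have hsL : MemLp (fun t => ψ (t + h)) p mu := by
    refine ⟨(hψm.comp (by fun_prop)).aestronglyMeasurable, ?_⟩
    rw [mu, per_eLpNorm hψp h pi_eq' pi_eq' p hψm.aestronglyMeasurable]
    exact hψL.2
  have hsi := hsL.integrable hp
  set φ : ℝ → ℝ := fun t => (1/2) * (ψ t - ψ (t + h)) with hφ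
  have hφm : Measurable φ := by
    have : Measurable fun t => ψ (t + h) := hψm.comp (by fun_prop)
    exact (hψm.sub this).const_mul _
  have hφp : Function.Periodic φ (2*π) := fun t => by
    simp only [hφ]; rw [hψp t, add_right_comm, hψp (t + h)]
  have hφi : Integrable φ mu := (hψi.sub hsi).const_mul _
  have hφ1 : eLpNorm φ p mu ≤ 1 := by
    have e : φ = (1/2 : ℝ) • (ψ - fun t => ψ (t + h)) := by
      funext t; simp [hφ]
    rw [e, eLpNorm_const_smul]
    have h1 := eLpNorm_sub_le hψL.1 hsL.1 hp
    have h2 : eLpNorm (fun t => ψ (t + h)) p mu ≤ 1 := by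
      rw [mu, per_eLpNorm hψp h pi_eq' pi_eq' p hψm.aestronglyMeasurable]
      exact hΨ1
    calc _ ≤ ‖(1/2:ℝ)‖ₑ * (1 + 1) := by
          gcongr
          exact h1.trans (add_le_add hΨ1 h2)
      _ = 1 := by
          rw [← ofReal_norm, one_add_one_eq_two, ← ENNReal.ofReal_ofNat 2, ← ENNReal.ofReal_mul (norm_nonneg _)]
          norm_num
  have hφ0 : ∫ t in (0:ℝ)..(2*π), φ t = 0 := by
    rw [intervalIntegral.integral_of_le (by linarith)]
    have e1 := per_integral hφp 0 tp_eq pi_eq' hφm.aestronglyMeasurable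
    simp only [add_zero] at e1
    rw [e1]
    simp only [hφ]
    rw [integral_const_mul, integral_sub hψi hsi, per_integral hψp h pi_eq' pi_eq' hψm.aestronglyMeasurable]
    simp
  set f : ℝ → ℝ := fun x => 0 / 2 + (1 / π) * ∫ t in (-π)..π, genPoissonKernel α r β (x - t) * φ t with hf
  have hfc : f ∈ poissonClass α r β p := by
    refine ⟨fun x => ?_, 0, φ, hφp, ?_, hφ0, fun x => rfl⟩
    · have : ∀ t, genPoissonKernel α r β (x + 2*π - t) = genPoissonKernel α r β (x - t) := by
        intro t
        rw [gen_eq hα hr0, gen_eq hα hr0, show x + 2*π - t = x - t + 2*π by ring, Fn_periodic α r 1 _ _]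
      simp only [hf, this]
    · have e1 := per_eLpNorm hφp 0 tp_eq pi_eq' p hφm.aestronglyMeasurable
      simp only [add_zero] at e1
      rw [e1]; exact hφ1
  have hdev := le_EnC hα hr0 hr1 hp hpq hn hfc 0
  have hfx : ∀ x, f x = 0 / 2 + (1 / π) * ∫ t in (-π)..π, Fn α r 1 (β*π/2) (x - t) * φ t := by
    intro x; simp only [hf, gen_eq hα hr0]
  rw [dev_eq hα hr0 ((intervalIntegrable_iff_integrableOn_Ioc_of_le (by linarith)).2 hφi) hfx hn 0] at hdev
  refine le_trans ?_ ((le_abs_self _).trans hdev)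
  gcongr
  rw [intervalIntegral.integral_of_le (by linarith)]
  have e0 : ∀ t, Fn α r n (β*π/2) (0 - t) = g t := by
    intro t; rw [hgdef, hθ, ← Fn_neg, zero_sub]
  simp only [e0]
  -- integrability of products with bounded continuous functions
  have hmulint : ∀ {u v : ℝ → ℝ}, Continuous u → Integrable v mu → Integrable (fun t => u t * v t) mu := by
    intro u v hu hv
    have hb := cont_memLp hu ∞
    exact hv.mul_of_top_right hb
  have hc2 : Continuous fun t => g (t + -h) := by fun_prop
  have i1 := hmulint hg hψi
  have i2 := hmulint hg hsi
  have i3 := hmulint hc2 hψi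
  have eG : ∫ t, g t * ψ (t + h) ∂mu = ∫ t, g (t + -h) * ψ t ∂mu := by
    have hGp : Function.Periodic (fun t => g (t + -h) * ψ t) (2*π) := fun t => by
      simp only []; rw [hψp t, add_right_comm, hgp]
    have := per_integral hGp h pi_eq' pi_eq' i3.1
    simpa using this
  have e1 : ∫ t, g t * φ t ∂mu = ∫ t, g t * ψ t ∂mu - (1/2) * ∫ t, (g t + g (t + -h)) * ψ t ∂mu := by
    have a1 : ∫ t, g t * φ t ∂mu = (1/2) * (∫ t, g t * ψ t ∂mu - ∫ t, g t * ψ (t + h) ∂mu) := by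
      rw [← integral_sub i1 i2, ← integral_const_mul]
      congr 1; funext t; simp only [hφ]; ring
    have a2 : ∫ t, (g t + g (t + -h)) * ψ t ∂mu = ∫ t, g t * ψ t ∂mu + ∫ t, g (t + -h) * ψ t ∂mu := by
      rw [← integral_add i1 i3]
      congr 1; funext t; ring
    rw [a1, a2, eG]; ring
  have e2 := holder hpq (cont_memLp (hg.add hc2) q) hψL.1 hΨ1
  have hPc := Pn_cont hα hr0 n
  have hPc2 : Continuous fun t => Pn α r n (t + -h) := by fun_prop
  have hε0 : 0 ≤ Real.exp (Mn α r n * (π / n)) - 1 := by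
    have : (1:ℝ) ≤ Real.exp (Mn α r n * (π / n)) := Real.one_le_exp (by positivity)
    linarith
  have e3 := NN_dom hq (g := fun t => g t + g (t + -h)) (g' := fun _ => 0) continuous_const hPc2 hε0 (fun t => by
    have := Fn_shift hα hr0 hn θ (t + -h) hpi.le
    rw [show t + -h + π / n = t by rw [hh]; ring] at this
    have e : Fn α r n (θ - π) (t + -h) = - g (t + -h) := by
      rw [Fn_polar, hgdef, ← sub_zero θ, Fn_polar, sub_zero, zero_add, add_comm π, Real.cos_add_pi]; ring
    rw [e, sub_neg_eq_add] at this
    simpa using this)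
  have e4 : NN q (fun t => Pn α r n (t + -h)) = NN q (Pn α r n) := by
    rw [NN, NN, mu, per_eLpNorm (Pn_periodic α r n) (-h) pi_eq' pi_eq' q hPc.aestronglyMeasurable]
  have e5 : NN q (fun _ : ℝ => (0:ℝ)) = 0 := by simp [NN]
  rw [e4, e5, zero_add] at e3
  have e6 : |∫ t, (g t + g (t + -h)) * ψ t ∂mu| ≤ (Real.exp (Mn α r n * (π / n)) - 1) * NN q (Pn α r n) :=
    e2.trans e3
  have e7 := (abs_le.1 e6).2
  change _ ≤ ∫ t, g t * φ t ∂mu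
  rw [e1]
  linarith [hΨ2]

lemma final {α r : ℝ} (hα : 0 < α) (hr0 : 0 < r) (hr1 : r < 1) {β : ℝ} {p q : ℝ≥0∞} (hp : 1 ≤ p)
    (hpq : 1 / p + 1 / q = 1) {n : ℕ} (hn : 1 ≤ n) :
    |EnC α r β p n - CC α r n q / π| < 14 * (NN q (Pn α r n) * (Mn α r n / n)) := by
  have hq : 1 ≤ q := by
    have h : 1 / q ≤ 1 := le_trans le_add_self hpq.le
    rwa [one_div, ENNReal.inv_le_one] at h
  have hpi := Real.pi_pos
  have hpi3 := Real.pi_gt_three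
  have hn0 : (0:ℝ) < n := by exact_mod_cast hn
  have hM := Mn_pos hα hr0 n
  have hN := Pn_pos_norm hα hr0 n hq
  have hC := CC_le hα hr0 n hq
  have hC0 := CC_nonneg α r n q
  have hA := Fn_le_Pn hα hr0 n (-(β * π / 2)) q
  have hE := EnC_le (β := β) hα hr0 hr1 hp hpq hn
  have hE0 := EnC_nonneg α r β p n
  set N := NN q (Pn α r n)
  set A := NN q (Fn α r n (-(β * π / 2))) with hAdef
  set x := Mn α r n / n with hx
  have hx0 : 0 < x := by positivity
  have hE' : π * EnC α r β p n ≤ A := by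
    have := mul_le_mul_of_nonneg_left hE hpi.le
    rwa [← mul_assoc, mul_one_div_cancel hpi.ne', one_mul] at this
  suffices hs : |π * EnC α r β p n - CC α r n q| < 14 * π * (N * x) by
    have e : EnC α r β p n - CC α r n q / π = (π * EnC α r β p n - CC α r n q) / π := by field_simp
    rw [e, abs_div, abs_of_pos hpi, div_lt_iff₀ hpi]
    linarith
  rcases le_or_gt (1 / (4 * π)) x with hbig | hsmall
  · have h1 : N ≤ 4 * π * (N * x) := by
      have : 1 ≤ 4 * π * x := by rw [div_le_iff₀ (by positivity)] at hbig; linarith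
      nlinarith
    have h2 : 0 < π * (N * x) := by positivity
    have h3 : 0 ≤ π * EnC α r β p n := by positivity
    rw [abs_lt]; constructor <;> nlinarith
  · have hs : 4 * π * x < 1 := by rw [lt_div_iff₀ (by positivity)] at hsmall; linarith
    have hexp : ∀ y : ℝ, 0 ≤ y → y ≤ 1/2 → Real.exp y - 1 ≤ 2 * y := by
      intro y h0 h1
      have := Real.abs_exp_sub_one_le (x := y) (by rw [abs_of_nonneg h0]; linarith)
      rw [abs_of_nonneg h0] at this
      exact (le_abs_self _).trans this
    have h1 : Real.exp (Mn α r n * (2 * π / n)) - 1 ≤ 4 * π * x := by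
      rw [show Mn α r n * (2 * π / n) = 2 * π * x by rw [hx]; ring]
      have := hexp (2 * π * x) (by positivity) (by linarith)
      linarith
    have h2 : Real.exp (Mn α r n * (π / n)) - 1 ≤ 2 * π * x := by
      rw [show Mn α r n * (π / n) = π * x by rw [hx]; ring]
      have := hexp (π * x) (by positivity) (by linarith)
      linarith
    have h3 := abs_le.1 (A_sub_C hα hr0 hn (-(β * π / 2)) hq h1)
    have hP : 0 < π * (N * x) := by positivity
    have h4 := lower (β := β) hα hr0 hr1 hp hq hpq hn hP
    have h5 : A - π * (N * x) - (1/2) * ((Real.exp (Mn α r n * (π / n)) - 1) * N) ≤ π * EnC α r β p n := by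
      have := mul_le_mul_of_nonneg_left h4 hpi.le
      rwa [← mul_assoc, mul_one_div_cancel hpi.ne', one_mul] at this
    have h6 : (Real.exp (Mn α r n * (π / n)) - 1) * N ≤ 2 * π * x * N := by gcongr
    rw [abs_lt]; constructor <;> nlinarith [h3.1, h3.2]

lemma main_thm (α r β : ℝ) (p p' : ℝ≥0∞)
    (hα : 0 < α) (hr0 : 0 < r) (hr1 : r < 1) (hp : 1 ≤ p)
    (hpp' : 1 / p + 1 / p' = 1) (n : ℕ) (hn : 1 ≤ n) :
      ∃ δ : ℝ, |δ| < 14 ∧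
        EnC α r β p n =
          (eLpNorm (Pn α r n) p' (volume.restrict (Set.Ioc (-π) π))).toReal *
            (cosNorm p' / ((2 : ℝ) ^ (1 / p'.toReal) * π ^ ((1 : ℝ) + 1 / p'.toReal)) +
              δ * Mn α r n / n) := by
  have hq : 1 ≤ p' := by
    have h : 1 / p' ≤ 1 := le_trans le_add_self hpp'.le
    rwa [one_div, ENNReal.inv_le_one] at h
  have hpi := Real.pi_pos
  have hn0 : (0:ℝ) < n := by exact_mod_cast hn
  have hM := Mn_pos hα hr0 n
  have hN := Pn_pos_norm hα hr0 n hq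
  have hf := final (β := β) hα hr0 hr1 hp hpp' hn
  have hD : 0 < NN p' (Pn α r n) * (Mn α r n / n) := by positivity
  refine ⟨(EnC α r β p n - CC α r n p' / π) / (NN p' (Pn α r n) * (Mn α r n / n)), ?_, ?_⟩
  · rw [abs_div, abs_of_pos hD, div_lt_iff₀ hD]; exact hf
  · change _ = NN p' (Pn α r n) * _
    have e : (2 : ℝ) ^ (1 / p'.toReal) * π ^ ((1 : ℝ) + 1 / p'.toReal) = (2*π) ^ (1/p'.toReal) * π := by
      rw [Real.rpow_add hpi, Real.rpow_one, Real.mul_rpow (by norm_num) hpi.le]; ring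
    rw [e, CC]
    have hb : 0 < (2*π) ^ (1/p'.toReal) := Real.rpow_pos_of_pos Real.two_pi_pos _
    generalize (2*π) ^ (1/p'.toReal) = b at hb
    field_simp
    ring

theorem statement19 (α r β : ℝ) (p p' : ℝ≥0∞)
    (hα : 0 < α) (hr0 : 0 < r) (hr1 : r < 1) (hp : 1 ≤ p)
    (hpp' : 1 / p + 1 / p' = 1) :
    ∀ n : ℕ, 1 ≤ n → (p' ≠ ∞ → 4 * π * p'.toReal * Mn α r n ≤ (n : ℝ)) →
      ∃ δ : ℝ, |δ| < 14 ∧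
        EnC α r β p n =
          (eLpNorm (Pn α r n) p' (volume.restrict (Set.Ioc (-π) π))).toReal *
            (cosNorm p' / ((2 : ℝ) ^ (1 / p'.toReal) * π ^ ((1 : ℝ) + 1 / p'.toReal)) +
              δ * Mn α r n / n) := by
  intro n hn _
  exact main_thm α r β p p' hα hr0 hr1 hp hpp' n hn
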